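/- arXiv:1108.4980 — 2 statements merged into one kernel-verified Lean document; each statement's English description precedes it below -/
import Mathlib

section
/- lim_{N→∞} Σ_{n=−N+1}^{N−1} Σ_{m∈ℤ} (−1)^{m+n} / ((8m)² + (4n+1)²) = (π/(8√2)) · log( (2^{1/8} + 1) / (2^{1/8} − 1) ), where 2^{1/8} denotes the positive real eighth root of 2. -/
open Filter

lemma hs_congr {α M : Type*} [AddCommMonoid M] [TopologicalSpace M] {f g : α → M} {a b : M}
    (h : HasSum f a) (hfg : ∀ i, g i = f i) (hab : b = a) : HasSum g b := by
  rw [hab, funext hfg]; exact h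

lemma aux_coth (b : ℝ) (hb : 0 < b) :
    HasSum (fun m : ℤ => 1 / ((m : ℝ) ^ 2 + b ^ 2))
      (Real.pi / b * (Real.cosh (Real.pi * b) / Real.sinh (Real.pi * b))) := by
  have hz : (Complex.I * b : ℂ) ∈ Complex.integerComplement := by
    rintro ⟨n, hn⟩
    have := congrArg Complex.im hn
    simp at this
    exact hb.ne this
  have h1 : HasSum (fun n : ℕ => cotTerm (Complex.I * b) n)
      (Real.pi * Complex.cot (Real.pi * (Complex.I * b)) - 1 / (Complex.I * b)) :=
    (Summable.hasSum_iff_tendsto_nat (summable_cotTerm hz)).mpr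
      (tendsto_logDeriv_euler_cot_sub hz)
  have hbc : (b : ℂ) ≠ 0 := by exact_mod_cast hb.ne'
  have hs : Real.sinh (Real.pi * b) ≠ 0 := by
    have : 0 < Real.sinh (Real.pi * b) := Real.sinh_pos_iff.mpr (by positivity)
    exact this.ne'
  have hsc : Complex.sinh (Real.pi * b) ≠ 0 := by
    rw [← Complex.ofReal_mul, ← Complex.ofReal_sinh]; exact_mod_cast hs
  have h2 := h1.mul_left (Complex.I / (2 * b))
  have h3 : HasSum (fun n : ℕ => 1 / (((n : ℝ) + 1) ^ 2 + b ^ 2))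
      ((Real.pi / b * (Real.cosh (Real.pi * b) / Real.sinh (Real.pi * b)) - 1 / b ^ 2) / 2) := by
    rw [← Complex.hasSum_ofReal]
    refine hs_congr h2 (fun n => ?_) ?_
    · rw [cotTerm_identity hz]
      have hne : (((n : ℂ) + 1) ^ 2 + b ^ 2) ≠ 0 := by
        have : (0 : ℝ) < ((n : ℝ) + 1) ^ 2 + b ^ 2 := by positivity
        exact_mod_cast this.ne'
      have : (Complex.I * b + ((n : ℂ) + 1)) * (Complex.I * b - (n + 1))
          = - (((n : ℂ) + 1) ^ 2 + b ^ 2) := by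
        ring_nf; rw [Complex.I_sq]; ring
      rw [this]
      push_cast
      field_simp
      ring_nf; rw [Complex.I_sq]; norm_num
    · rw [Complex.cot]
      have e : (Real.pi * (Complex.I * b) : ℂ) = (Real.pi * b) * Complex.I := by ring
      rw [e, Complex.cos_mul_I, Complex.sin_mul_I]
      push_cast
      field_simp
  set F : ℤ → ℝ := fun m : ℤ => 1 / ((m : ℝ) ^ 2 + b ^ 2) with hF
  have h4 : HasSum (fun n : ℕ => F ((n : ℤ) + 1)) _ := 
    hs_congr h3 (fun n => by rw [hF]; push_cast; rfl) rfl
  have h5 : HasSum (fun n : ℕ => F (-((n : ℤ) + 1))) _ := 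
    hs_congr h3 (fun n => by rw [hF]; push_cast; rw [neg_sq]) rfl
  have h6 := HasSum.of_add_one_of_neg_add_one h4 h5
  have h0 : F 0 = 1 / b ^ 2 := by simp [hF]
  rw [h0] at h6
  refine hs_congr h6 (fun n => rfl) ?_
  ring

lemma aux_csch (b : ℝ) (hb : 0 < b) :
    HasSum (fun m : ℤ => (-1 : ℝ) ^ m / ((m : ℝ) ^ 2 + b ^ 2))
      (Real.pi / (b * Real.sinh (Real.pi * b))) := by
  have h1 := aux_coth b hb
  have h2 := aux_coth (b / 2) (by positivity)
  have h3 : HasSum (fun m : ℤ => if Even m then 1 / ((m : ℝ) ^ 2 + b ^ 2) else 0)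
      (1 / 4 * (Real.pi / (b / 2) * (Real.cosh (Real.pi * (b / 2)) / Real.sinh (Real.pi * (b / 2))))) := by
    have inj : Function.Injective (fun m : ℤ => 2 * m) := fun x y h => by
      simp only at h; omega
    rw [← inj.hasSum_iff]
    · refine hs_congr (h2.mul_left (1 / 4)) (fun m => ?_) rfl
      have hne : (m : ℝ) ^ 2 + (b / 2) ^ 2 ≠ 0 := by positivity
      have hne' : (2 * m : ℝ) ^ 2 + b ^ 2 ≠ 0 := by positivity
      simp
      field_simp
      ring
    · intro m hm
      rw [if_neg]
      rintro ⟨k, hk⟩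
      exact hm ⟨k, by simp only; omega⟩
  have h4 := (h3.mul_left 2).sub h1
  refine hs_congr h4 (fun m => ?_) ?_
  · rcases Int.even_or_odd m with h | h
    · rw [if_pos h, h.neg_one_zpow]; ring
    · rw [if_neg (Int.not_even_iff_odd.mpr h), h.neg_one_zpow]; ring
  · have hs : 0 < Real.sinh (Real.pi * (b / 2)) := Real.sinh_pos_iff.mpr (by positivity)
    have hc := Real.cosh_pos (Real.pi * (b / 2))
    have e : Real.pi * b = 2 * (Real.pi * (b / 2)) := by ring
    rw [e, Real.sinh_two_mul, Real.cosh_two_mul, Real.sinh_sq]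
    field_simp
    ring

lemma aux_inner (a : ℝ) (ha : a ≠ 0) :
    ∑' m : ℤ, (-1 : ℝ) ^ m / ((8 * (m : ℝ)) ^ 2 + a ^ 2)
      = Real.pi / (8 * (|a| * Real.sinh (Real.pi * |a| / 8))) := by
  have h := (aux_csch (|a| / 8) (by positivity)).mul_left (1 / 64)
  have h2 := hs_congr (g := fun m : ℤ => (-1 : ℝ) ^ m / ((8 * (m : ℝ)) ^ 2 + a ^ 2)) h (fun m => by
    rw [div_pow, sq_abs]
    have hne : (m : ℝ) ^ 2 + a ^ 2 / 8 ^ 2 ≠ 0 := by positivity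
    have hne' : (8 * m : ℝ) ^ 2 + a ^ 2 ≠ 0 := by positivity
    field_simp
    ring) rfl
  rw [h2.tsum_eq]
  have : Real.pi * |a| / 8 = Real.pi * (|a| / 8) := by ring
  rw [this]
  have hs : 0 < Real.sinh (Real.pi * (|a| / 8)) := Real.sinh_pos_iff.mpr (by positivity)
  have : |a| ≠ 0 := by positivity
  field_simp
  norm_num

lemma aux_log (x : ℝ) (hx0 : 0 < x) (hx1 : x < 1) :
    HasSum (fun n : ℤ => (-1 : ℝ) ^ n * (x ^ (4 * n + 1).natAbs / ((4 * n + 1).natAbs : ℝ)))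
      (1 / (2 * Real.sqrt 2) * (Real.log (1 + Real.sqrt 2 * x + x ^ 2)
        - Real.log (1 - Real.sqrt 2 * x + x ^ 2))) := by
  have key : ∀ θ : ℝ, HasSum (fun k : ℕ => x ^ k / k * Real.cos (k * θ))
      (-(1 / 2 * Real.log (1 - 2 * Real.cos θ * x + x ^ 2))) := by
    intro θ
    have hn : ‖(x : ℂ) * Complex.exp (θ * Complex.I)‖ < 1 := by
      rw [norm_mul, Complex.norm_exp_ofReal_mul_I]; simp [abs_of_pos hx0, hx1]
    have h := Complex.hasSum_re (Complex.hasSum_taylorSeries_neg_log hn)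
    refine hs_congr h (fun k => ?_) ?_
    · rw [mul_pow, ← Complex.exp_nat_mul]
      have : (k : ℂ) * (θ * Complex.I) = ((k * θ : ℝ) : ℂ) * Complex.I := by push_cast; ring
      rw [this, mul_div_right_comm]
      have : (x : ℂ) ^ k / k = ((x ^ k / k : ℝ) : ℂ) := by push_cast; rfl
      rw [this, Complex.re_ofReal_mul, Complex.exp_ofReal_mul_I_re]
    · rw [Complex.neg_re, Complex.log_re]
      have : 1 - 2 * Real.cos θ * x + x ^ 2 = ‖1 - (x : ℂ) * Complex.exp (θ * Complex.I)‖ ^ 2 := by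
        rw [← Complex.normSq_eq_norm_sq, Complex.normSq_apply]
        simp [Complex.exp_ofReal_mul_I_re, Complex.exp_ofReal_mul_I_im]
        nlinarith [Real.sin_sq_add_cos_sq θ]
      rw [this, Real.log_pow]; push_cast; ring
  have h2 : (0:ℝ) < Real.sqrt 2 := by positivity
  have hsq : Real.sqrt 2 ^ 2 = 2 := Real.sq_sqrt (by norm_num)
  have c3 : Real.cos (3 * (Real.pi / 4)) = - (Real.sqrt 2 / 2) := by
    rw [show 3 * (Real.pi / 4) = Real.pi - Real.pi / 4 by ring, Real.cos_pi_sub, Real.cos_pi_div_four]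
  have hA := ((key (Real.pi / 4)).sub (key (3 * (Real.pi / 4)))).mul_left (1 / Real.sqrt 2)
  rw [Real.cos_pi_div_four, c3] at hA
  have inj : Function.Injective (fun n : ℤ => (4 * n + 1).natAbs) := fun a b h => by
    simp only at h; omega
  have hz : ∀ k ∉ Set.range (fun n : ℤ => (4 * n + 1).natAbs),
      1 / Real.sqrt 2 * (x ^ k / k * Real.cos (k * (Real.pi / 4))
        - x ^ k / k * Real.cos (k * (3 * (Real.pi / 4)))) = 0 := by
    intro k hk
    have hev : Even k := by
      by_contra hodd
      rw [Nat.not_even_iff_odd] at hodd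
      obtain ⟨j, hj⟩ := hodd
      apply hk
      rcases Nat.even_or_odd j with ⟨i, hi⟩ | ⟨i, hi⟩
      · exact ⟨i, by simp only; omega⟩
      · exact ⟨-(i + 1), by simp only; omega⟩
    obtain ⟨j, rfl⟩ := hev
    have : Real.cos (((j + j : ℕ) : ℝ) * (3 * (Real.pi / 4)))
        = Real.cos (((j + j : ℕ) : ℝ) * (Real.pi / 4)) := by
      rw [← sub_eq_zero, Real.cos_sub_cos]
      push_cast
      have : ((j + j : ℝ) * (3 * (Real.pi / 4)) + (j + j) * (Real.pi / 4)) / 2 = (j : ℝ) * Real.pi := by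
        ring
      rw [this, Real.sin_nat_mul_pi]; simp
    rw [this]; simp
  rw [← inj.hasSum_iff hz] at hA
  refine hs_congr hA (fun n => ?_) ?_
  · simp only [Function.comp]
    have e1 : ∀ θ : ℝ, Real.cos (((4 * n + 1).natAbs : ℝ) * θ) = Real.cos ((4 * n + 1) * θ) := by
      intro θ
      rw [Nat.cast_natAbs]
      push_cast
      rcases abs_choice ((4 * n + 1 : ℝ)) with h | h
      · rw [h]
      · rw [h, neg_mul, Real.cos_neg]
    rw [e1, e1]
    have e2 : (4 * n + 1 : ℝ) * (Real.pi / 4) = Real.pi / 4 + n * Real.pi := by ring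
    have e3 : (4 * n + 1 : ℝ) * (3 * (Real.pi / 4)) = 3 * (Real.pi / 4) + (n + (2 * n : ℤ) : ℤ) * Real.pi := by
      push_cast; ring
    rw [e2, e3, Real.cos_add_int_mul_pi, Real.cos_add_int_mul_pi, c3, Real.cos_pi_div_four,
      zpow_add₀ (by norm_num), (even_two_mul n).neg_one_zpow]
    field_simp
    ring
  · have e1 : 1 - 2 * (Real.sqrt 2 / 2) * x + x ^ 2 = 1 - Real.sqrt 2 * x + x ^ 2 := by ring
    have e2 : 1 - 2 * -(Real.sqrt 2 / 2) * x + x ^ 2 = 1 + Real.sqrt 2 * x + x ^ 2 := by ring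
    rw [e1, e2]
    field_simp
    ring

lemma aux_geom (k : ℕ) (hk : 0 < k) :
    HasSum (fun j : ℕ => (Real.exp (-Real.pi / 8) ^ (2 * j + 1)) ^ k / (k : ℝ))
      (1 / (2 * (k * Real.sinh (Real.pi * k / 8)))) := by
  set q := Real.exp (-Real.pi / 8) with hq
  have hq0 : 0 < q := Real.exp_pos _
  have hq1 : q < 1 := by
    rw [hq, Real.exp_lt_one_iff]; have := Real.pi_pos; linarith
  have h2 : q ^ (2 * k) < 1 := pow_lt_one₀ hq0.le hq1 (by omega)
  have h := (hasSum_geometric_of_lt_one (by positivity) h2).mul_left (q ^ k / k)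
  have hkr : (0 : ℝ) < k := by exact_mod_cast hk
  have hqk : q ^ k = Real.exp (-(Real.pi * k / 8)) := by
    rw [hq, ← Real.exp_nat_mul]; congr 1; ring
  refine hs_congr h (fun j => ?_) ?_
  · rw [← pow_mul, ← pow_mul, div_mul_eq_mul_div, ← pow_add]
    congr 2; ring
  · have h3 : q ^ (2 * k) = (q ^ k) ^ 2 := by rw [← pow_mul, mul_comm]
    have hpos : 0 < q ^ k := by positivity
    have h4 : 1 - (q ^ k) ^ 2 ≠ 0 := by rw [← h3]; linarith
    have hsinh : Real.sinh (Real.pi * k / 8) = (1 - (q ^ k) ^ 2) / (2 * q ^ k) := by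
      rw [Real.sinh_eq, ← hqk]
      have : Real.exp (Real.pi * k / 8) = (q ^ k)⁻¹ := by rw [hqk, Real.exp_neg, inv_inv]
      rw [this]; field_simp
    rw [h3, hsinh]
    field_simp

lemma aux_double :
    ∃ S : ℝ, HasSum (fun n : ℤ => (-1 : ℝ) ^ n *
        (1 / (2 * (((4 * n + 1).natAbs : ℝ) * Real.sinh (Real.pi * ((4 * n + 1).natAbs : ℝ) / 8))))) S ∧
      HasSum (fun j : ℕ => 1 / (2 * Real.sqrt 2) *
        (Real.log (1 + Real.sqrt 2 * Real.exp (-Real.pi / 8) ^ (2 * j + 1)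
            + (Real.exp (-Real.pi / 8) ^ (2 * j + 1)) ^ 2)
        - Real.log (1 - Real.sqrt 2 * Real.exp (-Real.pi / 8) ^ (2 * j + 1)
            + (Real.exp (-Real.pi / 8) ^ (2 * j + 1)) ^ 2))) S := by
  set q := Real.exp (-Real.pi / 8) with hq
  have hq0 : 0 < q := Real.exp_pos _
  have hq1 : q < 1 := by
    rw [hq, Real.exp_lt_one_iff]; have := Real.pi_pos; linarith
  set f : ℤ × ℕ → ℝ := fun p => (-1 : ℝ) ^ p.1 *
    ((q ^ (2 * p.2 + 1)) ^ (4 * p.1 + 1).natAbs / ((4 * p.1 + 1).natAbs : ℝ)) with hf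
  have hgeo : Summable (fun j : ℕ => q ^ j) := summable_geometric_of_lt_one hq0.le hq1
  have hgeoz : Summable (fun n : ℤ => q ^ n.natAbs) := by
    apply Summable.of_nat_of_neg <;> simpa using hgeo
  have hfs : Summable f := by
    refine Summable.of_norm_bounded (hgeoz.mul_of_nonneg hgeo (fun n => by positivity)
      (fun n => by positivity)) ?_
    rintro ⟨n, j⟩
    simp only [hf]
    have hk : 1 ≤ (4 * n + 1).natAbs := by omega
    have hk2 : n.natAbs + 1 ≤ (4 * n + 1).natAbs := by omega
    have hkr : (1 : ℝ) ≤ ((4 * n + 1).natAbs : ℝ) := by exact_mod_cast hk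
    rw [norm_mul, norm_zpow, norm_neg, norm_one, one_zpow, one_mul, Real.norm_of_nonneg (by positivity)]
    refine (div_le_self (by positivity) hkr).trans ?_
    rw [← pow_mul, ← pow_add]
    apply pow_le_pow_of_le_one hq0.le hq1.le
    nlinarith
  refine ⟨∑' p, f p, ?_, ?_⟩
  · refine hfs.hasSum.prod_fiberwise (fun n => ?_)
    exact (aux_geom _ (by omega)).mul_left _
  · have h := (Equiv.prodComm ℕ ℤ).hasSum_iff.mpr hfs.hasSum
    refine h.prod_fiberwise (fun j => ?_)
    have := aux_log (q ^ (2 * j + 1)) (by positivity) (pow_lt_one₀ hq0.le hq1 (by omega))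
    exact this

lemma quad_pos (x : ℝ) : 0 < 1 - Real.sqrt 2 * x + x ^ 2 := by
  have hsq : Real.sqrt 2 ^ 2 = 2 := Real.sq_sqrt (by norm_num)
  nlinarith [sq_nonneg (x - Real.sqrt 2 / 2)]

lemma quad_pos' (x : ℝ) : 0 < 1 + Real.sqrt 2 * x + x ^ 2 := by
  have hsq : Real.sqrt 2 ^ 2 = 2 := Real.sq_sqrt (by norm_num)
  nlinarith [sq_nonneg (x + Real.sqrt 2 / 2)]

/-- Reduction of the theorem to an infinite product. -/
lemma reduction (R : ℝ) (hR : 0 < R)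
    (hprod : Tendsto (fun N : ℕ =>
      (∏ j ∈ Finset.range N, (1 + Real.sqrt 2 * Real.exp (-Real.pi / 8) ^ (2 * j + 1)
            + (Real.exp (-Real.pi / 8) ^ (2 * j + 1)) ^ 2)) /
      (∏ j ∈ Finset.range N, (1 - Real.sqrt 2 * Real.exp (-Real.pi / 8) ^ (2 * j + 1)
            + (Real.exp (-Real.pi / 8) ^ (2 * j + 1)) ^ 2))) atTop (nhds R)) :
    Tendsto (fun N : ℕ => ∑ n ∈ Finset.Ioo (-(N : ℤ)) (N : ℤ),
        ∑' m : ℤ, (-1 : ℝ) ^ (m + n) / ((8 * (m : ℝ)) ^ 2 + (4 * (n : ℝ) + 1) ^ 2))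
      atTop (nhds (Real.pi / (8 * Real.sqrt 2) * Real.log R)) := by
  obtain ⟨S, h1, h2⟩ := aux_double
  have h3 := h2.tendsto_sum_nat
  have h4 := ((Real.continuousAt_log hR.ne').tendsto.comp hprod).const_mul (1 / (2 * Real.sqrt 2))
  have hS : S = 1 / (2 * Real.sqrt 2) * Real.log R := by
    refine tendsto_nhds_unique (h3.congr fun N => ?_) h4
    simp only [Function.comp]
    rw [Real.log_div (Finset.prod_ne_zero_iff.mpr fun j _ => (quad_pos' _).ne')
      (Finset.prod_ne_zero_iff.mpr fun j _ => (quad_pos _).ne'),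
      Real.log_prod (fun j _ => (quad_pos' _).ne'),
      Real.log_prod (fun j _ => (quad_pos _).ne'), ← Finset.sum_sub_distrib, Finset.mul_sum]
  have h5 := h1.mul_left (Real.pi / 4)
  have hterm : ∀ n : ℤ, ∑' m : ℤ, (-1 : ℝ) ^ (m + n) / ((8 * (m : ℝ)) ^ 2 + (4 * (n : ℝ) + 1) ^ 2)
      = Real.pi / 4 * ((-1 : ℝ) ^ n *
        (1 / (2 * (((4 * n + 1).natAbs : ℝ) * Real.sinh (Real.pi * ((4 * n + 1).natAbs : ℝ) / 8))))) := by
    intro n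
    have ha : (4 * (n : ℝ) + 1) ≠ 0 := by
      have : (4 * n + 1 : ℤ) ≠ 0 := by omega
      exact_mod_cast this
    have hab : ((4 * n + 1).natAbs : ℝ) = |4 * (n : ℝ) + 1| := by
      rw [Nat.cast_natAbs]; push_cast; rfl
    have : ∀ m : ℤ, (-1 : ℝ) ^ (m + n) / ((8 * (m : ℝ)) ^ 2 + (4 * (n : ℝ) + 1) ^ 2)
        = (-1 : ℝ) ^ n * ((-1 : ℝ) ^ m / ((8 * (m : ℝ)) ^ 2 + (4 * (n : ℝ) + 1) ^ 2)) := by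
      intro m
      rw [zpow_add₀ (by norm_num)]; ring
    rw [tsum_congr this, tsum_mul_left, aux_inner _ ha, hab]
    have h0 : 0 < |4 * (n : ℝ) + 1| := abs_pos.mpr ha
    have hs : 0 < Real.sinh (Real.pi * |4 * (n : ℝ) + 1| / 8) :=
      Real.sinh_pos_iff.mpr (by have := Real.pi_pos; positivity)
    field_simp
    norm_num
  have h6 : HasSum (fun n : ℤ => ∑' m : ℤ, (-1 : ℝ) ^ (m + n) / ((8 * (m : ℝ)) ^ 2 + (4 * (n : ℝ) + 1) ^ 2))
      (Real.pi / (8 * Real.sqrt 2) * Real.log R) := by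
    refine hs_congr h5 hterm ?_
    rw [hS]; field_simp; ring
  refine h6.comp ?_
  apply tendsto_atTop_finset_of_monotone
  · intro a b hab
    apply Finset.Ioo_subset_Ioo <;> simpa using hab
  · intro n
    exact ⟨n.natAbs + 1, by rw [Finset.mem_Ioo]; constructor <;> omega⟩

/-- Inverse of the finite `q`-Pochhammer symbol, extended by zero. -/
noncomputable def wq (p : ℝ) (m : ℤ) : ℝ :=
  if m < 0 then 0 else (∏ i ∈ Finset.range m.toNat, (1 - p ^ (i + 1)))⁻¹

lemma one_sub_pow_pos {p : ℝ} (h0 : 0 < p) (h1 : p < 1) (i : ℕ) : 0 < 1 - p ^ (i + 1) := by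
  have := pow_lt_one₀ h0.le h1 (show i + 1 ≠ 0 by omega)
  linarith

lemma wq_rec {p : ℝ} (h0 : 0 < p) (h1 : p < 1) (m : ℤ) :
    wq p m = (1 - p ^ (m + 1)) * wq p (m + 1) := by
  unfold wq
  rcases lt_trichotomy m (-1) with h | h | h
  · rw [if_pos (by omega), if_pos (by omega)]; simp
  · subst h; simp
  · obtain ⟨k, rfl⟩ := Int.eq_ofNat_of_zero_le (show 0 ≤ m by omega)
    rw [if_neg (by omega), if_neg (by omega)]
    have : ((k : ℤ) + 1).toNat = k + 1 := by omega
    rw [this, Int.toNat_natCast, Finset.prod_range_succ]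
    have e : p ^ ((k : ℤ) + 1) = p ^ (k + 1) := by exact_mod_cast zpow_natCast p (k + 1)
    rw [e]
    have := one_sub_pow_pos h0 h1 k
    have h3 : ∏ i ∈ Finset.range k, (1 - p ^ (i + 1)) ≠ 0 :=
      Finset.prod_ne_zero_iff.mpr fun j _ => (one_sub_pow_pos h0 h1 j).ne'
    field_simp

lemma wq_nonneg {p : ℝ} (h0 : 0 < p) (h1 : p < 1) (m : ℤ) : 0 ≤ wq p m := by
  unfold wq
  split_ifs
  · exact le_rfl
  · exact inv_nonneg.mpr (Finset.prod_nonneg fun j _ => (one_sub_pow_pos h0 h1 j).le)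

lemma wq_lim {p : ℝ} (h0 : 0 < p) (h1 : p < 1) :
    ∃ W : ℝ, 0 < W ∧ (∀ m, wq p m ≤ W) ∧ Tendsto (wq p) atTop (nhds W) := by
  have hs : Summable (fun i : ℕ => Real.log (1 + -p ^ (i + 1))) := by
    apply Real.summable_log_one_add_of_summable
    exact ((summable_nat_add_iff 1).mpr (summable_geometric_of_lt_one h0.le h1)).neg
  have hs2 : Summable (fun i : ℕ => - Real.log (1 - p ^ (i + 1))) := by
    simpa only [← sub_eq_add_neg] using hs.neg
  have hw : ∀ k : ℕ, wq p k = Real.exp (∑ i ∈ Finset.range k, - Real.log (1 - p ^ (i + 1))) := by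
    intro k
    unfold wq
    rw [if_neg (by omega), Real.exp_sum, Int.toNat_natCast, ← Finset.prod_inv_distrib]
    refine Finset.prod_congr rfl fun i _ => ?_
    rw [Real.exp_neg, Real.exp_log (one_sub_pow_pos h0 h1 i)]
  refine ⟨Real.exp (∑' i : ℕ, - Real.log (1 - p ^ (i + 1))), Real.exp_pos _, ?_, ?_⟩
  · intro m
    rcases lt_or_ge m 0 with h | h
    · unfold wq; rw [if_pos h]; exact (Real.exp_pos _).le
    · obtain ⟨k, rfl⟩ := Int.eq_ofNat_of_zero_le h
      rw [hw, Real.exp_le_exp]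
      refine hs2.sum_le_tsum _ fun i _ => ?_
      have := one_sub_pow_pos h0 h1 i
      have h3 : 0 < p ^ (i + 1) := by positivity
      rw [neg_nonneg]
      exact Real.log_nonpos this.le (by linarith)
  · have h2 := (Real.continuous_exp.tendsto _).comp hs2.hasSum.tendsto_sum_nat
    have h3 : Tendsto (fun k : ℕ => wq p k) atTop
        (nhds (Real.exp (∑' i : ℕ, - Real.log (1 - p ^ (i + 1))))) :=
      h2.congr fun k => (hw k).symm
    have h4 := h3.comp (tendsto_atTop_atTop.mpr fun b : ℕ =>
      ⟨(b : ℤ), fun a ha => (by omega : b ≤ a.toNat)⟩)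
    refine h4.congr' ?_
    filter_upwards [eventually_ge_atTop 0] with m hm
    simp [Int.toNat_of_nonneg hm]

/-- Finite Jacobi triple product, real form. -/
lemma finite_jtp (q : ℝ) (h0 : 0 < q) (h1 : q < 1) (θ : ℝ) (N : ℕ) :
    HasSum (fun n : ℤ => (wq (q ^ 2) (N - n) * wq (q ^ 2) (N + n)) * q ^ (n ^ 2) * Real.cos (n * θ))
      ((∏ j ∈ Finset.range N, (1 + 2 * Real.cos θ * q ^ (2 * j + 1) + (q ^ (2 * j + 1)) ^ 2))
        * wq (q ^ 2) (2 * N)) := by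
  have hp0 : 0 < q ^ 2 := by positivity
  have hp1 : q ^ 2 < 1 := pow_lt_one₀ h0.le h1 (by norm_num)
  induction N with
  | zero =>
    refine hs_congr (hasSum_ite_eq (0 : ℤ) (1 : ℝ)) (fun n => ?_) ?_
    · rcases lt_trichotomy n 0 with h | h | h
      · rw [if_neg (by omega)]; simp [wq, h]
      · subst h; simp [wq]
      · rw [if_neg (by omega)]; simp [wq, h]
    · simp [wq]
  | succ N ih =>
    set F : ℤ → ℝ := fun n : ℤ => (wq (q ^ 2) (N - n) * wq (q ^ 2) (N + n)) * q ^ (n ^ 2) with hF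
    set P := ∏ j ∈ Finset.range N, (1 + 2 * Real.cos θ * q ^ (2 * j + 1) + (q ^ (2 * j + 1)) ^ 2) with hP
    set A := P * wq (q ^ 2) (2 * N) with hA
    have ih' : HasSum (fun n : ℤ => F n * Real.cos (n * θ)) A := ih
    -- the shifted sums
    have hsh : HasSum (fun n : ℤ => (F (n - 1) + F (n + 1)) * Real.cos (n * θ))
        (2 * Real.cos θ * A) := by
      have hsum : ∀ n, F n * Real.cos (n * θ) = F n * Real.cos (n * θ) := fun _ => rfl
      have hFs : Summable (fun n : ℤ => F n) := by
        -- finite support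
        apply summable_of_ne_finset_zero (s := Finset.Icc (-(N : ℤ)) N)
        intro n hn
        rw [Finset.mem_Icc, not_and_or] at hn
        simp only [hF]
        rcases hn with h | h
        · have : wq (q ^ 2) (N + n) = 0 := by unfold wq; rw [if_pos (by omega)]
          rw [this]; simp
        · have : wq (q ^ 2) (N - n) = 0 := by unfold wq; rw [if_pos (by omega)]
          rw [this]; simp
      have hs1 : Summable (fun n : ℤ => F n * Real.cos ((n + 1 : ℤ) * θ)) := by
        refine Summable.of_norm_bounded hFs.norm fun n => ?_
        rw [norm_mul]
        exact mul_le_of_le_one_right (norm_nonneg _) (Real.abs_cos_le_one _)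
      have hs2 : Summable (fun n : ℤ => F n * Real.cos ((n - 1 : ℤ) * θ)) := by
        refine Summable.of_norm_bounded hFs.norm fun n => ?_
        rw [norm_mul]
        exact mul_le_of_le_one_right (norm_nonneg _) (Real.abs_cos_le_one _)
      have hh1 := (Equiv.subRight (1 : ℤ)).hasSum_iff.mpr hs1.hasSum
      have hh2 := (Equiv.addRight (1 : ℤ)).hasSum_iff.mpr hs2.hasSum
      have hh3 := hh1.add hh2
      have hh4 := hs1.hasSum.add hs2.hasSum
      have hh5 := ih'.mul_left (2 * Real.cos θ)
      have hval : 2 * Real.cos θ * A = _ := hh5.unique (hs_congr hh4 (fun n => by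
        have e1 : (((n + 1 : ℤ) : ℝ) * θ) = n * θ + θ := by push_cast; ring
        have e2 : (((n - 1 : ℤ) : ℝ) * θ) = n * θ - θ := by push_cast; ring
        rw [e1, e2, Real.cos_add, Real.cos_sub]; ring) rfl)
      rw [hval]
      refine hs_congr hh3 (fun n => ?_) rfl
      simp only [Function.comp, Equiv.subRight_apply, Equiv.coe_addRight, sub_add_cancel,
        add_sub_cancel_right]
      ring
    set x := q ^ (2 * N + 1) with hx
    have hfin := ((ih'.mul_left (1 + x ^ 2)).add (hsh.mul_left x)).mul_left
      (wq (q ^ 2) (2 * (N + 1 : ℕ)) / wq (q ^ 2) (2 * N))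
    have hwne : wq (q ^ 2) (2 * N) ≠ 0 := by
      unfold wq
      rw [if_neg (by omega)]
      exact inv_ne_zero (Finset.prod_ne_zero_iff.mpr fun j _ => (one_sub_pow_pos hp0 hp1 j).ne')
    refine hs_congr hfin (fun n => ?_) ?_
    · set u := wq (q ^ 2) (N + 1 - n) with hu
      set v := wq (q ^ 2) (N + 1 + n) with hv
      set a := (q ^ 2) ^ ((N : ℤ) + 1 - n) with ha
      set b := (q ^ 2) ^ ((N : ℤ) + 1 + n) with hb
      have hqne : q ^ 2 ≠ 0 := hp0.ne'
      have w1 : wq (q ^ 2) (N - n) = (1 - a) * u := by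
        rw [wq_rec hp0 hp1, ha, hu, show (N : ℤ) - n + 1 = N + 1 - n by ring]
      have w2 : wq (q ^ 2) (N + n) = (1 - b) * v := by
        rw [wq_rec hp0 hp1, hb, hv, show (N : ℤ) + n + 1 = N + 1 + n by ring]
      have w3 : wq (q ^ 2) (N - n - 1) = (1 - a / q ^ 2) * ((1 - a) * u) := by
        rw [wq_rec hp0 hp1, sub_add_cancel, w1, ha, add_sub_right_comm, zpow_add_one₀ hqne]
        field_simp
      have w4 : wq (q ^ 2) (N + n - 1) = (1 - b / q ^ 2) * ((1 - b) * v) := by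
        rw [wq_rec hp0 hp1, sub_add_cancel, w2, hb, add_right_comm, zpow_add_one₀ hqne]
        field_simp
      have hab : a * b = (q ^ 2) ^ (2 * N + 2) := by
        rw [ha, hb, ← zpow_add₀ hqne, ← zpow_natCast (q ^ 2) (2 * N + 2)]
        congr 1; push_cast; ring
      have w5 : wq (q ^ 2) (2 * N) = (1 - a * b / q ^ 2) * ((1 - a * b) * wq (q ^ 2) (2 * (N + 1 : ℕ))) := by
        rw [wq_rec hp0 hp1, wq_rec hp0 hp1 (2 * N + 1), hab]
        have e1 : (q ^ 2) ^ (2 * (N : ℤ) + 1) = (q ^ 2) ^ (2 * N + 2) / q ^ 2 := by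
          rw [eq_div_iff hqne, ← zpow_natCast (q ^ 2) (2 * N + 2), ← zpow_add_one₀ hqne]; congr 1
        have e2 : (q ^ 2) ^ (2 * (N : ℤ) + 1 + 1) = (q ^ 2) ^ (2 * N + 2) := by
          rw [← zpow_natCast (q ^ 2) (2 * N + 2)]; congr 1
        rw [e1, e2]; congr 3
      have hx2 : x ^ 2 = a * b / q ^ 2 := by
        rw [hab, hx, eq_div_iff hqne]; ring
      have hxm : x * q ^ ((n - 1) ^ 2) = a * q ^ (n ^ 2) := by
        rw [hx, ha, ← zpow_natCast, ← zpow_natCast, ← zpow_mul, ← zpow_add₀ h0.ne', ← zpow_add₀ h0.ne']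
        congr 1; push_cast; ring
      have hxp : x * q ^ ((n + 1) ^ 2) = b * q ^ (n ^ 2) := by
        rw [hx, hb, ← zpow_natCast, ← zpow_natCast, ← zpow_mul, ← zpow_add₀ h0.ne', ← zpow_add₀ h0.ne']
        congr 1; push_cast; ring
      have hFm : x * F (n - 1) = u * ((1 - b / q ^ 2) * ((1 - b) * v)) * (a * q ^ (n ^ 2)) := by
        rw [← hxm, ← w4, hF, hu]
        simp only
        rw [show (N : ℤ) - (n - 1) = N + 1 - n by ring, show (N : ℤ) + (n - 1) = N + n - 1 by ring]
        ring
      have hFp : x * F (n + 1) = ((1 - a / q ^ 2) * ((1 - a) * u)) * v * (b * q ^ (n ^ 2)) := by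
        rw [← hxp, ← w3, hF, hv]
        simp only
        rw [show (N : ℤ) - (n + 1) = N - n - 1 by ring, show (N : ℤ) + (n + 1) = N + 1 + n by ring]
        ring
      have hF0 : F n = ((1 - a) * u) * ((1 - b) * v) * q ^ (n ^ 2) := by
        rw [← w1, ← w2]
      have hL : wq (q ^ 2) (2 * (N + 1 : ℕ)) * ((1 + x ^ 2) * F n + (x * F (n - 1) + x * F (n + 1)))
          = wq (q ^ 2) (2 * N) * (u * v * q ^ (n ^ 2)) := by
        rw [hF0, hFm, hFp, hx2, w5]; ring
      have e1 : ((N + 1 : ℕ) : ℤ) - n = N + 1 - n := by push_cast; ring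
      have e2 : ((N + 1 : ℕ) : ℤ) + n = N + 1 + n := by push_cast; ring
      rw [e1, e2, ← hu, ← hv]
      have : u * v * q ^ (n ^ 2) = wq (q ^ 2) (2 * (N + 1 : ℕ)) / wq (q ^ 2) (2 * N) *
          ((1 + x ^ 2) * F n + (x * F (n - 1) + x * F (n + 1))) := by
        rw [div_mul_eq_mul_div, hL]; field_simp
      rw [this]; ring
    · rw [Finset.prod_range_succ, ← hP, hA]
      field_simp
      rw [hx]; ring

lemma tendsto_jtp (q : ℝ) (h0 : 0 < q) (h1 : q < 1) (hsum : Summable (fun n : ℤ => q ^ (n ^ 2))) :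
    ∃ W : ℝ, 0 < W ∧ ∀ θ : ℝ, Tendsto (fun N : ℕ =>
      (∏ j ∈ Finset.range N, (1 + 2 * Real.cos θ * q ^ (2 * j + 1) + (q ^ (2 * j + 1)) ^ 2)))
      atTop (nhds (W * ∑' n : ℤ, q ^ (n ^ 2) * Real.cos (n * θ))) := by
  have hp0 : 0 < q ^ 2 := by positivity
  have hp1 : q ^ 2 < 1 := pow_lt_one₀ h0.le h1 (by norm_num)
  obtain ⟨W, hW0, hWle, hWt⟩ := wq_lim hp0 hp1
  refine ⟨W, hW0, fun θ => ?_⟩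
  have hT : Tendsto (fun N : ℕ => ∑' n : ℤ,
      (wq (q ^ 2) (N - n) * wq (q ^ 2) (N + n)) * q ^ (n ^ 2) * Real.cos (n * θ)) atTop
      (nhds (∑' n : ℤ, (W * W) * q ^ (n ^ 2) * Real.cos (n * θ))) := by
    refine tendsto_tsum_of_dominated_convergence (hsum.mul_left (W * W)) ?_ ?_
    · intro n
      have t1 : Tendsto (fun N : ℕ => (N : ℤ) - n) atTop atTop :=
        tendsto_atTop_add_const_right _ (-n) tendsto_natCast_atTop_atTop
      have t2 : Tendsto (fun N : ℕ => (N : ℤ) + n) atTop atTop :=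
        tendsto_atTop_add_const_right _ n tendsto_natCast_atTop_atTop
      exact (((hWt.comp t1).mul (hWt.comp t2)).mul_const _).mul_const _
    · refine Eventually.of_forall fun N n => ?_
      rw [norm_mul]
      refine (mul_le_of_le_one_right (norm_nonneg _) (Real.abs_cos_le_one _)).trans ?_
      have a1 := wq_nonneg hp0 hp1 (N - n)
      have a2 := wq_nonneg hp0 hp1 (N + n)
      have a3 : 0 < q ^ (n ^ 2) := zpow_pos h0 _
      rw [Real.norm_of_nonneg (by positivity)]
      gcongr
      · exact hWle _
      · exact hWle _
  have t3 : Tendsto (fun N : ℕ => wq (q ^ 2) (2 * (N : ℤ))) atTop (nhds W) :=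
    hWt.comp (tendsto_atTop_mono (f := fun N : ℕ => (N : ℤ)) (fun N => by omega)
      tendsto_natCast_atTop_atTop)
  have h5 := hT.div t3 hW0.ne'
  have e : (∑' n : ℤ, (W * W) * q ^ (n ^ 2) * Real.cos (n * θ)) / W
      = W * ∑' n : ℤ, q ^ (n ^ 2) * Real.cos (n * θ) := by
    simp_rw [mul_assoc, tsum_mul_left]; rw [mul_div_cancel_left₀ _ hW0.ne']
  rw [e] at h5
  refine h5.congr fun N => ?_
  simp only [Pi.div_apply]
  rw [(finite_jtp q h0 h1 θ N).tsum_eq]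
  have hwne : wq (q ^ 2) (2 * N) ≠ 0 := by
    unfold wq
    rw [if_neg (by omega)]
    exact inv_ne_zero (Finset.prod_ne_zero_iff.mpr fun j _ => (one_sub_pow_pos hp0 hp1 j).ne')
  field_simp

lemma exp_zpow_aux (x : ℝ) (k : ℤ) : Real.exp x ^ k = Real.exp (k * x) := by
  rw [← Real.rpow_intCast, ← Real.exp_mul, mul_comm]

lemma gsum (a b : ℝ) (ha : 0 < a) : Summable (fun n : ℤ => Real.exp (-Real.pi * (a * n ^ 2 + b * n))) := by
  have h := summable_pow_mul_jacobiTheta₂_term_bound (|b| / 2) ha 0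
  refine Summable.of_nonneg_of_le (fun n => (Real.exp_pos _).le) (fun n => ?_) h
  rw [pow_zero, one_mul, Real.exp_le_exp]
  have h1 : -(b * n) ≤ |b| * |(n : ℝ)| := by rw [← abs_mul]; exact neg_le_abs _
  have hp := Real.pi_pos
  push_cast
  nlinarith

lemma gsum' {f : ℤ → ℝ} (a b c : ℝ) (ha : 0 < a)
    (hf : ∀ n : ℤ, f n = Real.exp (-Real.pi * (a * n ^ 2 + b * n + c))) : Summable f := by
  refine ((gsum a b ha).mul_left (Real.exp (-Real.pi * c))).congr fun n => ?_
  rw [hf, ← Real.exp_add]; congr 1; ring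

lemma gsum_alt {f : ℤ → ℝ} (a b c : ℝ) (ha : 0 < a)
    (hf : ∀ n : ℤ, f n = (-1) ^ n * Real.exp (-Real.pi * (a * n ^ 2 + b * n + c))) : Summable f := by
  refine Summable.of_norm_bounded (gsum' a b c ha (fun n => rfl)) fun n => ?_
  rw [hf, norm_mul, norm_zpow, norm_neg, norm_one, one_zpow, one_mul, Real.norm_of_nonneg (Real.exp_pos _).le]

lemma two_inj : Function.Injective (fun n : ℤ => 2 * n) := fun x y h => by simp only at h; omega
lemma two_inj' : Function.Injective (fun n : ℤ => 2 * n + 1) := fun x y h => by simp only at h; omega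

lemma parity_split {f : ℤ → ℝ} (hf : Summable f) :
    ∑' n, f n = ∑' n, f (2 * n) + ∑' n, f (2 * n + 1) := by
  have h1 := (hf.comp_injective two_inj).hasSum
  have h2 := (hf.comp_injective two_inj').hasSum
  have hc : IsCompl (Set.range (fun n : ℤ => 2 * n)) (Set.range (fun n : ℤ => 2 * n + 1)) := by
    rw [isCompl_iff]
    constructor
    · rw [Set.disjoint_left]
      rintro _ ⟨x, rfl⟩ ⟨y, hy⟩
      simp only at hy; omega
    · rw [codisjoint_iff_le_sup]
      intro n _
      rcases Int.even_or_odd' n with ⟨k, h | h⟩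
      · exact Or.inl ⟨k, h.symm⟩
      · exact Or.inr ⟨k, h.symm⟩
  exact (HasSum.add_isCompl hc (two_inj.hasSum_range_iff.mpr h1) (two_inj'.hasSum_range_iff.mpr h2)).tsum_eq

lemma lattice_sq {f g h : ℤ → ℝ} (hf : Summable f) (hg : Summable g) (hh : Summable h)
    (e : ∀ a b, f a * f b = g (a + b) * h (a - b)) :
    (∑' n, f n) ^ 2 = (∑' n, g (2 * n)) * (∑' n, h (2 * n))
      + (∑' n, g (2 * n + 1)) * (∑' n, h (2 * n + 1)) := by
  have hp : ∀ {u v : ℤ → ℝ}, Summable u → Summable v →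
      HasSum (fun x : ℤ × ℤ => u x.1 * v x.2) ((∑' n, u n) * (∑' n, v n)) := fun hu hv =>
    hu.hasSum.mul hv.hasSum (summable_mul_of_summable_norm hu.norm hv.norm)
  have h0 := hp hf hf
  set F : ℤ × ℤ → ℝ := fun x => f x.1 * f x.2 with hF
  have h1 := hp (hg.comp_injective two_inj) (hh.comp_injective two_inj)
  have h2 := hp (hg.comp_injective two_inj') (hh.comp_injective two_inj')
  let i1 : ℤ × ℤ → ℤ × ℤ := fun x => (x.1 + x.2, x.1 - x.2)
  let i2 : ℤ × ℤ → ℤ × ℤ := fun x => (x.1 + x.2 + 1, x.1 - x.2)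
  have inj1 : Function.Injective i1 := by
    rintro ⟨a, b⟩ ⟨c, d⟩ h
    simp only [i1, Prod.mk.injEq] at h ⊢; omega
  have inj2 : Function.Injective i2 := by
    rintro ⟨a, b⟩ ⟨c, d⟩ h
    simp only [i2, Prod.mk.injEq] at h ⊢; omega
  have hc : IsCompl (Set.range i1) (Set.range i2) := by
    rw [isCompl_iff]
    constructor
    · rw [Set.disjoint_left]
      rintro _ ⟨⟨a, b⟩, rfl⟩ ⟨⟨c, d⟩, hy⟩
      simp only [i1, i2, Prod.mk.injEq] at hy; omega
    · rw [codisjoint_iff_le_sup]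
      rintro ⟨a, b⟩ _
      rcases Int.even_or_odd' (a + b) with ⟨k, h | h⟩
      · exact Or.inl ⟨(k, a - k), by simp only [i1, Prod.mk.injEq]; omega⟩
      · exact Or.inr ⟨(k, a - k - 1), by simp only [i2, Prod.mk.injEq]; omega⟩
  have h1' : HasSum (F ∘ i1) _ := hs_congr h1 (fun x => by
    simp only [hF, Function.comp, i1]
    rw [e]; congr 2 <;> ring) rfl
  have h2' : HasSum (F ∘ i2) _ := hs_congr h2 (fun x => by
    simp only [hF, Function.comp, i2]
    rw [e]; congr 2 <;> ring) rfl
  have h3 := HasSum.add_isCompl hc (inj1.hasSum_range_iff.mpr h1') (inj2.hasSum_range_iff.mpr h2')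
  rw [sq]
  exact h0.unique h3

lemma poisson_cos (a β : ℝ) (ha : 0 < a) :
    ∑' n : ℤ, Real.exp (-Real.pi * a * n ^ 2) * Real.cos (n * (2 * Real.pi * β))
      = 1 / a ^ (1 / 2 : ℝ) * ∑' n : ℤ, Real.exp (-Real.pi / a * (n - β) ^ 2) := by
  have h := Complex.tsum_exp_neg_quadratic (a := (a : ℂ)) (by simpa using ha) (Complex.I * β)
  have hterm : ∀ n : ℤ, Complex.exp (-Real.pi * a * n ^ 2 + 2 * Real.pi * (Complex.I * β) * n)
      = ((Real.exp (-Real.pi * a * n ^ 2) : ℝ) : ℂ)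
        * Complex.exp (((n * (2 * Real.pi * β) : ℝ) : ℂ) * Complex.I) := by
    intro n
    rw [Complex.ofReal_exp, ← Complex.exp_add]; congr 1; push_cast; ring
  have hS : Summable (fun n : ℤ => Complex.exp (-Real.pi * a * n ^ 2 + 2 * Real.pi * (Complex.I * β) * n)) := by
    refine Summable.of_norm ((gsum' a 0 0 ha (f := fun n : ℤ => Real.exp (-Real.pi * a * n ^ 2))
      (fun n => by congr 1; ring)).congr fun n => ?_)
    rw [hterm, norm_mul, Complex.norm_exp_ofReal_mul_I, mul_one, Complex.norm_real,
      Real.norm_of_nonneg (Real.exp_pos _).le]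
  have hR : (1 / (a : ℂ) ^ (1 / 2 : ℂ) * ∑' n : ℤ, Complex.exp (-Real.pi / a * (n + Complex.I * (Complex.I * β)) ^ 2))
      = ((1 / a ^ (1 / 2 : ℝ) * ∑' n : ℤ, Real.exp (-Real.pi / a * (n - β) ^ 2) : ℝ) : ℂ) := by
    push_cast [Complex.ofReal_cpow ha.le]
    congr 1
    refine tsum_congr fun n => ?_
    congr 3
    rw [← mul_assoc, Complex.I_mul_I]; ring
  rw [hR] at h
  have h' := congrArg Complex.re h
  rw [Complex.ofReal_re, Complex.re_tsum hS] at h'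
  rw [← h']
  refine tsum_congr fun n => ?_
  rw [hterm, Complex.re_ofReal_mul, Complex.exp_ofReal_mul_I_re]

lemma theta_four :
    (∑' n : ℤ, Real.exp (-Real.pi * n ^ 2)) ^ 4
      = 2 * (∑' n : ℤ, (-1 : ℝ) ^ n * Real.exp (-Real.pi * n ^ 2)) ^ 4 := by
  set u := ∑' n : ℤ, Real.exp (-Real.pi * n ^ 2) with hu
  set v := ∑' n : ℤ, (-1 : ℝ) ^ n * Real.exp (-Real.pi * n ^ 2) with hv
  set r : ℤ → ℝ := fun n => Real.exp (-Real.pi * (n ^ 2 / 2)) with hr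
  have hrs : Summable r := gsum' (1 / 2) 0 0 (by norm_num) fun n => by rw [hr]; simp only; congr 1; ring
  have hra : Summable (fun n : ℤ => (-1 : ℝ) ^ n * r n) :=
    gsum_alt (1 / 2) 0 0 (by norm_num) fun n => by rw [hr]; simp only; congr 2; ring
  set X := ∑' n : ℤ, r (2 * n) with hX
  set Y := ∑' n : ℤ, r (2 * n + 1) with hY
  have e1 : u ^ 2 = X * X + Y * Y := by
    refine lattice_sq (gsum' 1 0 0 one_pos fun n => by congr 1; ring) hrs hrs fun a b => ?_
    rw [hr]; simp only
    rw [← Real.exp_add, ← Real.exp_add]; congr 1; push_cast; ring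
  have e2 : v ^ 2 = X * X - Y * Y := by
    rw [hv, lattice_sq (gsum_alt 1 0 0 one_pos fun n => by congr 2; ring) hra hrs fun a b => ?_]
    · have : ∀ n : ℤ, (-1 : ℝ) ^ (2 * n) * r (2 * n) = r (2 * n) := fun n => by
        rw [(even_two_mul n).neg_one_zpow, one_mul]
      rw [tsum_congr this]
      have : ∀ n : ℤ, (-1 : ℝ) ^ (2 * n + 1) * r (2 * n + 1) = - r (2 * n + 1) := fun n => by
        rw [(odd_two_mul_add_one n).neg_one_zpow]; ring
      rw [tsum_congr this, tsum_neg]; ring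
    · rw [hr]; simp only
      rw [zpow_add₀ (by norm_num)]
      have : Real.exp (-Real.pi * a ^ 2) * Real.exp (-Real.pi * b ^ 2)
          = Real.exp (-Real.pi * (((a + b : ℤ) : ℝ) ^ 2 / 2)) * Real.exp (-Real.pi * (((a - b : ℤ) : ℝ) ^ 2 / 2)) := by
        rw [← Real.exp_add, ← Real.exp_add]; congr 1; push_cast; ring
      linear_combination ((-1 : ℝ) ^ a * (-1 : ℝ) ^ b) * this
  have e3 : v = ∑' n : ℤ, Real.exp (-Real.pi * (n - 1 / 2) ^ 2) := by
    have h := poisson_cos 1 (1 / 2) one_pos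
    rw [Real.one_rpow, div_one, one_mul] at h
    simp only [div_one, mul_one] at h
    rw [← h, hv]
    refine tsum_congr fun n => ?_
    rw [show (n : ℝ) * (2 * Real.pi * (1 / 2)) = n * Real.pi by ring, Real.cos_int_mul_pi, mul_comm]
  have hYs : ∑' n : ℤ, r (2 * n - 1) = Y := by
    rw [hY, ← (Equiv.subRight (1 : ℤ)).tsum_eq (fun n => r (2 * n + 1))]
    refine tsum_congr fun n => ?_
    simp only [Equiv.subRight_apply]; congr 1; ring
  have e4 : v ^ 2 = Y * X + X * Y := by
    rw [e3, lattice_sq (g := fun n => r (n - 1)) (h := r)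
      (gsum' 1 (-1) (1 / 4) one_pos fun n => by congr 1; ring)
      (hrs.comp_injective (sub_left_injective)) hrs fun a b => ?_]
    · simp only [add_sub_cancel_right]
      rw [hYs]
    · rw [hr]; simp only
      rw [← Real.exp_add, ← Real.exp_add]; congr 1; push_cast; ring
  have : u ^ 4 = (u ^ 2) ^ 2 := by ring
  rw [this, e1]
  have : 2 * v ^ 4 = (v ^ 2) ^ 2 + (v ^ 2) ^ 2 := by ring
  rw [this]
  nth_rewrite 1 [e2]
  rw [e4]; ring

lemma EO_rel :
    ((∑' n : ℤ, Real.exp (-Real.pi * (2 * (2 * n) ^ 2 + 2 * n)))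
      + ∑' n : ℤ, Real.exp (-Real.pi * (2 * (2 * n + 1) ^ 2 + (2 * n + 1)))) ^ 8
    = 2 * ((∑' n : ℤ, Real.exp (-Real.pi * (2 * (2 * n) ^ 2 + 2 * n)))
      - ∑' n : ℤ, Real.exp (-Real.pi * (2 * (2 * n + 1) ^ 2 + (2 * n + 1)))) ^ 8 := by
  set r : ℤ → ℝ := fun n => Real.exp (-Real.pi * n ^ 2) with hr
  set w : ℤ → ℝ := fun n => Real.exp (-Real.pi * (n ^ 2 + n)) with hw
  set s : ℤ → ℝ := fun n => Real.exp (-Real.pi * (2 * n ^ 2 + n)) with hs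
  have hrs : Summable r := gsum' 1 0 0 one_pos fun n => by rw [hr]; simp only; congr 1; ring
  have hra : Summable (fun n : ℤ => (-1 : ℝ) ^ n * r n) :=
    gsum_alt 1 0 0 one_pos fun n => by rw [hr]; simp only; congr 2; ring
  have hws : Summable w := gsum' 1 1 0 one_pos fun n => by rw [hw]; simp only; congr 1; ring
  have hwa : Summable (fun n : ℤ => (-1 : ℝ) ^ n * w n) :=
    gsum_alt 1 1 0 one_pos fun n => by rw [hw]; simp only; congr 2; ring
  have hss : Summable s := gsum' 2 1 0 two_pos fun n => by rw [hs]; simp only; congr 1; ring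
  have hsa : Summable (fun n : ℤ => (-1 : ℝ) ^ n * s n) :=
    gsum_alt 2 1 0 two_pos fun n => by rw [hs]; simp only; congr 2; ring
  have hE : ∑' n : ℤ, Real.exp (-Real.pi * (2 * (2 * n) ^ 2 + 2 * n)) = ∑' n : ℤ, s (2 * n) :=
    tsum_congr fun n => by rw [hs]; push_cast; rfl
  have hO : ∑' n : ℤ, Real.exp (-Real.pi * (2 * (2 * n + 1) ^ 2 + (2 * n + 1)))
      = ∑' n : ℤ, s (2 * n + 1) :=
    tsum_congr fun n => by rw [hs]; push_cast; rfl
  rw [hE, hO]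
  have alt : ∀ {t : ℤ → ℝ}, ∑' n : ℤ, (-1 : ℝ) ^ (2 * n) * t (2 * n) = ∑' n : ℤ, t (2 * n) := by
    intro t
    refine tsum_congr fun n => ?_
    rw [(even_two_mul n).neg_one_zpow, one_mul]
  have alt' : ∀ {t : ℤ → ℝ}, ∑' n : ℤ, (-1 : ℝ) ^ (2 * n + 1) * t (2 * n + 1)
      = - ∑' n : ℤ, t (2 * n + 1) := by
    intro t
    rw [← tsum_neg]
    refine tsum_congr fun n => ?_
    rw [(odd_two_mul_add_one n).neg_one_zpow]; ring
  have p1 := parity_split hss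
  have p2 := parity_split hsa
  have p3 := parity_split hrs
  have p4 := parity_split hra
  rw [alt, alt'] at p2 p4
  have hZ : ∑' n : ℤ, w (2 * n + 1) = ∑' n : ℤ, w (2 * n) := by
    rw [← (Equiv.subLeft (-1 : ℤ)).tsum_eq (fun n => w (2 * n + 1))]
    refine tsum_congr fun n => ?_
    simp only [Equiv.subLeft_apply, hw]; congr 1; push_cast; ring
  have hmul : ∀ a b : ℤ, s a * s b = w (a + b) * r (a - b) := by
    intro a b
    rw [hs, hw, hr]; simp only
    rw [← Real.exp_add, ← Real.exp_add]; congr 1; push_cast; ring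
  have q1 := lattice_sq hss hws hrs hmul
  have q2 := lattice_sq hsa hwa hrs fun a b => by
    rw [zpow_add₀ (by norm_num)]
    linear_combination ((-1 : ℝ) ^ a * (-1 : ℝ) ^ b) * hmul a b
  rw [alt, alt'] at q2
  rw [hZ] at q1 q2
  have q3 := theta_four
  have q4 : (∑' n : ℤ, r n) ^ 4 = 2 * (∑' n : ℤ, (-1 : ℝ) ^ n * r n) ^ 4 := q3
  rw [p1] at q1
  rw [p2] at q2
  rw [p3, p4] at q4
  set E := ∑' n : ℤ, s (2 * n)
  set O := ∑' n : ℤ, s (2 * n + 1)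
  set Z := ∑' n : ℤ, w (2 * n)
  set x := ∑' n : ℤ, r (2 * n)
  set y := ∑' n : ℤ, r (2 * n + 1)
  have a1 : (E + O) ^ 8 = ((E + O) ^ 2) ^ 4 := by ring
  have a2 : (E - O) ^ 8 = ((E + -O) ^ 2) ^ 4 := by ring
  rw [a1, a2, q1, q2]
  linear_combination Z ^ 4 * q4

lemma theta_quarter :
    ∑' n : ℤ, Real.exp (-Real.pi / 8) ^ (n ^ 2) * Real.cos (n * (Real.pi / 4))
      = (1 / (1 / 8 : ℝ) ^ (1 / 2 : ℝ) * Real.exp (-Real.pi / 8)) *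
        ∑' n : ℤ, Real.exp (-Real.pi * (2 * (2 * n) ^ 2 + 2 * n)) := by
  have h := poisson_cos (1 / 8) (1 / 8) (by norm_num)
  have h1 : ∀ n : ℤ, Real.exp (-Real.pi / 8) ^ (n ^ 2) * Real.cos (n * (Real.pi / 4))
      = Real.exp (-Real.pi * (1 / 8) * n ^ 2) * Real.cos (n * (2 * Real.pi * (1 / 8))) := by
    intro n
    rw [exp_zpow_aux]
    congr 2 <;> (push_cast; ring)
  rw [tsum_congr h1, h, mul_assoc, ← tsum_mul_left (a := Real.exp (-Real.pi / 8)),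
    ← (Equiv.neg ℤ).tsum_eq (fun n : ℤ => Real.exp (-Real.pi / 8) *
      Real.exp (-Real.pi * (2 * (2 * n) ^ 2 + 2 * n)))]
  congr 1
  refine tsum_congr fun n => ?_
  rw [← Real.exp_add]; congr 1
  simp only [Equiv.neg_apply]
  push_cast; ring

lemma theta_three_quarter :
    ∑' n : ℤ, Real.exp (-Real.pi / 8) ^ (n ^ 2) * Real.cos (n * (3 * (Real.pi / 4)))
      = (1 / (1 / 8 : ℝ) ^ (1 / 2 : ℝ) * Real.exp (-Real.pi / 8)) *
        ∑' n : ℤ, Real.exp (-Real.pi * (2 * (2 * n + 1) ^ 2 + (2 * n + 1))) := by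
  have h := poisson_cos (1 / 8) (3 / 8) (by norm_num)
  have h1 : ∀ n : ℤ, Real.exp (-Real.pi / 8) ^ (n ^ 2) * Real.cos (n * (3 * (Real.pi / 4)))
      = Real.exp (-Real.pi * (1 / 8) * n ^ 2) * Real.cos (n * (2 * Real.pi * (3 / 8))) := by
    intro n
    rw [exp_zpow_aux]
    congr 2 <;> (push_cast; ring)
  rw [tsum_congr h1, h, mul_assoc, ← tsum_mul_left (a := Real.exp (-Real.pi / 8)),
    ← (Equiv.subRight (1 : ℤ)).tsum_eq (fun n : ℤ => Real.exp (-Real.pi / 8) *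
      Real.exp (-Real.pi * (2 * (2 * n + 1) ^ 2 + (2 * n + 1))))]
  congr 1
  refine tsum_congr fun n => ?_
  rw [← Real.exp_add]; congr 1
  simp only [Equiv.subRight_apply]
  push_cast; ring

/-- `∑∑ (-1)^{m+n}/((8m)² + (4n+1)²) = (π/(8√2)) log((2^{1/8} + 1)/(2^{1/8} - 1))`. -/
theorem F41_at_eight :
    Tendsto (fun N : ℕ => ∑ n ∈ Finset.Ioo (-(N : ℤ)) (N : ℤ),
        ∑' m : ℤ, (-1 : ℝ) ^ (m + n) / ((8 * (m : ℝ)) ^ 2 + (4 * (n : ℝ) + 1) ^ 2))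
      atTop
      (nhds (Real.pi / (8 * Real.sqrt 2) *
        Real.log (((2 : ℝ) ^ ((1 : ℝ) / 8) + 1) / ((2 : ℝ) ^ ((1 : ℝ) / 8) - 1)))) := by
  set r : ℝ := (2 : ℝ) ^ ((1 : ℝ) / 8) with hr
  have hr1 : 1 < r := Real.one_lt_rpow (by norm_num) (by norm_num)
  have hr8 : r ^ 8 = 2 := by
    rw [hr, ← Real.rpow_natCast, ← Real.rpow_mul (by norm_num)]; norm_num
  apply reduction _ (div_pos (by linarith) (by linarith))
  set q := Real.exp (-Real.pi / 8) with hq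
  have hq0 : 0 < q := Real.exp_pos _
  have hq1 : q < 1 := by
    rw [hq, Real.exp_lt_one_iff]; have := Real.pi_pos; linarith
  have hsum : Summable (fun n : ℤ => q ^ (n ^ 2)) :=
    gsum' (1 / 8) 0 0 (by norm_num) fun n => by
      rw [hq, exp_zpow_aux]; congr 1; push_cast; ring
  obtain ⟨W, hW, hlim⟩ := tendsto_jtp q hq0 hq1 hsum
  have l1 := hlim (Real.pi / 4)
  have l3 := hlim (3 * (Real.pi / 4))
  rw [hq, theta_quarter, ← hq] at l1
  rw [hq, theta_three_quarter, ← hq] at l3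
  have key := EO_rel
  have sE : Summable (fun n : ℤ => Real.exp (-Real.pi * (2 * (2 * n) ^ 2 + 2 * n))) :=
    gsum' 8 2 0 (by norm_num) fun n => by congr 1; ring
  have sO : Summable (fun n : ℤ => Real.exp (-Real.pi * (2 * (2 * n + 1) ^ 2 + (2 * n + 1)))) :=
    gsum' 8 10 3 (by norm_num) fun n => by congr 1; ring
  have hE := sE.tsum_pos (fun n => (Real.exp_pos _).le) 0 (Real.exp_pos _)
  have hO := sO.tsum_pos (fun n => (Real.exp_pos _).le) 0 (Real.exp_pos _)
  set E := ∑' n : ℤ, Real.exp (-Real.pi * (2 * (2 * n) ^ 2 + 2 * n))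
  set O := ∑' n : ℤ, Real.exp (-Real.pi * (2 * (2 * n + 1) ^ 2 + (2 * n + 1)))
  set C : ℝ := 1 / (1 / 8 : ℝ) ^ (1 / 2 : ℝ) * q with hC
  have hC0 : 0 < C := by positivity
  have c3 : Real.cos (3 * (Real.pi / 4)) = - (Real.sqrt 2 / 2) := by
    rw [show 3 * (Real.pi / 4) = Real.pi - Real.pi / 4 by ring, Real.cos_pi_sub, Real.cos_pi_div_four]
  rw [Real.cos_pi_div_four] at l1
  rw [c3] at l3
  have k1 : ∀ x : ℝ, 1 + 2 * (Real.sqrt 2 / 2) * x + x ^ 2 = 1 + Real.sqrt 2 * x + x ^ 2 :=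
    fun x => by ring
  have k3 : ∀ x : ℝ, 1 + 2 * -(Real.sqrt 2 / 2) * x + x ^ 2 = 1 - Real.sqrt 2 * x + x ^ 2 :=
    fun x => by ring
  simp only [k1] at l1
  simp only [k3] at l3
  have hOE : O ≤ E := by
    have hle := le_of_tendsto_of_tendsto' l3 l1 fun N =>
      Finset.prod_le_prod (fun j _ => (quad_pos _).le) fun j _ => by
        have : 0 ≤ Real.sqrt 2 * q ^ (2 * j + 1) := by positivity
        linarith
    have h2 : 0 < W * C := by positivity
    refine le_of_mul_le_mul_left ?_ h2
    rw [mul_assoc W C O, mul_assoc W C E]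
    exact hle
  have hlin : E + O = r * (E - O) := by
    refine (pow_left_inj₀ (by positivity)
      (mul_nonneg (by linarith) (by linarith)) (show 8 ≠ 0 by norm_num)).mp ?_
    rw [key, mul_pow, hr8]
  have hfin := l1.div l3 (by positivity)
  have hval : W * (C * E) / (W * (C * O)) = (r + 1) / (r - 1) := by
    have : r - 1 ≠ 0 := by linarith
    rw [div_eq_div_iff (by positivity) this]
    linear_combination (-W * C) * hlin
  rw [hval] at hfin
  exact hfin
end

section
/- lim_{N→∞} Σ_{n=−N+1}^{N−1} Σ_{m∈ℤ} (−1)^{m+n} / (m² + (5n+1)²) = −(π/(5√5)) · log( −19 + 9√5 − 3√(85 − 38√5) ) + (π/5) · log( √5 − 1 ). -/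
open Filter


namespace F51

lemma hasSum_int_split {f : ℤ → ℝ} {a b : ℝ} (h0 : HasSum (fun k : ℤ => f (2 * k)) a)
    (h1 : HasSum (fun k : ℤ => f (2 * k + 1)) b) : HasSum f (a + b) := by
  have i0 : Function.Injective (fun k : ℤ => 2 * k) := fun x y h => by simpa using h
  have i1 : Function.Injective (fun k : ℤ => 2 * k + 1) := fun x y h => by simpa using h
  refine (i0.hasSum_range_iff.2 h0).add_isCompl ?_ (i1.hasSum_range_iff.2 h1)
  constructor
  · rw [Set.disjoint_iff_inter_eq_empty]
    ext x
    simp only [Set.mem_inter_iff, Set.mem_range, Set.mem_empty_iff_false, iff_false]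
    rintro ⟨⟨y, rfl⟩, ⟨z, hz⟩⟩
    omega
  · rw [codisjoint_iff_le_sup]
    intro x _
    rcases Int.even_or_odd' x with ⟨k, rfl | rfl⟩
    · exact Or.inl ⟨k, rfl⟩
    · exact Or.inr ⟨k, rfl⟩

lemma tsum_int_split {f : ℤ → ℝ} (hf : Summable f) :
    ∑' k, f k = ∑' k : ℤ, f (2 * k) + ∑' k : ℤ, f (2 * k + 1) := by
  have i0 : Function.Injective (fun k : ℤ => 2 * k) := fun x y h => by simpa using h
  have i1 : Function.Injective (fun k : ℤ => 2 * k + 1) := fun x y h => by simpa using h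
  exact (hasSum_int_split (hf.comp_injective i0).hasSum (hf.comp_injective i1).hasSum).tsum_eq

/-- Gaussian weights are summable over the integers. -/
lemma summable_gauss {c a : ℝ} (hc : 0 < c) (ha : |a| ≤ 1 / 2) :
    Summable (fun n : ℤ => Real.exp (-c * ((n : ℝ) + a) ^ 2)) := by
  have hn : Summable (fun n : ℕ => Real.exp c * Real.exp (-c) ^ n) := by
    apply Summable.mul_left
    apply summable_geometric_of_lt_one (Real.exp_pos _).le
    rw [Real.exp_lt_one_iff]; linarith
  have key : ∀ n : ℕ, ∀ b : ℝ, |b| ≤ 1 / 2 →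
      Real.exp (-c * ((n : ℝ) + b) ^ 2) ≤ Real.exp c * Real.exp (-c) ^ n := by
    intro n b hb
    rw [← Real.exp_nat_mul, ← Real.exp_add]
    apply Real.exp_le_exp.2
    rw [abs_le] at hb
    have hn0 : (0 : ℝ) ≤ n := n.cast_nonneg
    have : (n : ℝ) - 1 ≤ (n + b) ^ 2 := by nlinarith [sq_nonneg ((n : ℝ) - 1), sq_nonneg b]
    nlinarith
  apply Summable.of_nat_of_neg
  · exact Summable.of_nonneg_of_le (fun _ => (Real.exp_pos _).le) (fun n => by simpa using key n a ha) hn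
  · refine Summable.of_nonneg_of_le (fun _ => (Real.exp_pos _).le) (fun n => ?_) hn
    have := key n (-a) (by simpa using ha)
    convert this using 2
    push_cast; ring

/-- weights -/
noncomputable def w (n : ℤ) : ℝ := Real.exp (-Real.pi * (n : ℝ) ^ 2)
noncomputable def wA (n : ℤ) : ℝ := Real.exp (-(2 * Real.pi) * (n : ℝ) ^ 2)
noncomputable def wB (n : ℤ) : ℝ := Real.exp (-(2 * Real.pi) * ((n : ℝ) + 1 / 2) ^ 2)

lemma summable_w : Summable w := by
  have := summable_gauss (c := Real.pi) (a := 0) Real.pi_pos (by norm_num)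
  simp only [add_zero] at this
  exact this
lemma summable_wA : Summable wA := by
  have := summable_gauss (c := 2 * Real.pi) (a := 0) (by positivity) (by norm_num)
  simp only [add_zero] at this
  exact this
lemma summable_wB : Summable wB :=
  summable_gauss (c := 2 * Real.pi) (a := 1 / 2) (by positivity) (by norm_num [abs_of_pos])

lemma w_pos (n) : 0 < w n := Real.exp_pos _
lemma wA_pos (n) : 0 < wA n := Real.exp_pos _
lemma wB_pos (n) : 0 < wB n := Real.exp_pos _

noncomputable def Th (t : ℝ) : ℝ := ∑' n : ℤ, w n * Real.cos (n * t)
noncomputable def A (t : ℝ) : ℝ := ∑' n : ℤ, wA n * Real.cos (2 * n * t)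
noncomputable def B (t : ℝ) : ℝ := ∑' n : ℤ, wB n * Real.cos ((2 * n + 1) * t)

lemma summable_mul_bdd {v : ℤ → ℝ} (hv : Summable v) (hp : ∀ n, 0 < v n) (c : ℤ → ℝ)
    (hc : ∀ n, |c n| ≤ 1) : Summable (fun n => v n * c n) := by
  refine Summable.of_norm_bounded hv (fun n => ?_)
  rw [Real.norm_eq_abs, abs_mul, abs_of_pos (hp n)]
  exact mul_le_of_le_one_right (hp n).le (hc n)

lemma tsum_odd_zero {f : ℤ → ℝ} (e : ℤ ≃ ℤ) (hf : ∀ n, f (e n) = - f n) : ∑' n, f n = 0 := by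
  have h := e.tsum_eq f
  simp only [hf, tsum_neg] at h
  linarith

/-- product of two cosine series as a double series -/
lemma mul_double {u v : ℤ → ℝ} {x y : ℤ → ℝ} (hv : Summable v)
    (hvp : ∀ n, 0 < v n)
    (hs : ∑' n, v n * Real.sin (y n) = 0) :
    (∑' n, u n * Real.cos (x n)) * (∑' n, v n * Real.cos (y n)) =
      ∑' m, ∑' n, u m * v n * Real.cos (x m + y n) := by
  rw [← tsum_mul_right]
  congr 1; ext m
  have h1 := summable_mul_bdd hv hvp (fun n => Real.cos (y n)) (fun n => Real.abs_cos_le_one _)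
  have h2 := summable_mul_bdd hv hvp (fun n => Real.sin (y n)) (fun n => Real.abs_sin_le_one _)
  have : ∀ n, u m * v n * Real.cos (x m + y n) =
      u m * Real.cos (x m) * (v n * Real.cos (y n)) - u m * Real.sin (x m) * (v n * Real.sin (y n)) := by
    intro n; rw [Real.cos_add]; ring
  simp_rw [this]
  rw [(h1.mul_left _).tsum_sub (h2.mul_left _), tsum_mul_left, tsum_mul_left, hs]
  ring

lemma sin_w (t : ℝ) : ∑' n : ℤ, w n * Real.sin (n * t) = 0 := by
  apply tsum_odd_zero (Equiv.neg ℤ)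
  intro n; simp [w]
lemma sin_wA (t : ℝ) : ∑' n : ℤ, wA n * Real.sin (2 * n * t) = 0 := by
  apply tsum_odd_zero (Equiv.neg ℤ)
  intro n; simp [wA]
lemma sin_wB (t : ℝ) : ∑' n : ℤ, wB n * Real.sin ((2 * n + 1) * t) = 0 := by
  apply tsum_odd_zero (Equiv.subLeft (-1))
  intro n
  simp only [wB, Equiv.subLeft_apply]
  rw [← mul_neg (Real.exp _), ← Real.sin_neg]
  congr 2 <;> push_cast <;> ring

lemma Th_mul (s t : ℝ) : Th (s + t) * Th (s - t) = A s * A t + B s * B t := by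
  unfold Th A B
  rw [mul_double summable_w w_pos (sin_w _),
    mul_double summable_wA wA_pos (sin_wA _),
    mul_double summable_wB wB_pos (sin_wB _)]
  have sub : ∀ m : ℤ, ∑' n : ℤ, w m * w n * Real.cos (m * (s + t) + n * (s - t)) =
      ∑' k : ℤ, w m * w (k - m) * Real.cos (k * s + (2 * m - k) * t) := by
    intro m
    rw [← (Equiv.subRight m).tsum_eq]
    congr 1; ext k
    simp only [Equiv.subRight_apply]
    congr 2; push_cast; ring
  simp_rw [sub]
  have S2 : Summable (fun p : ℤ × ℤ => w p.1 * w p.2) :=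
    summable_mul_of_summable_norm summable_w.norm summable_w.norm
  let e : ℤ × ℤ ≃ ℤ × ℤ :=
    { toFun := fun p => (p.1, p.2 - p.1), invFun := fun p => (p.1, p.2 + p.1)
      left_inv := fun p => by simp, right_inv := fun p => by simp }
  have S3 : Summable (fun p : ℤ × ℤ => w p.1 * w (p.2 - p.1)) := (e.summable_iff).2 S2
  have S : Summable (Function.uncurry (fun m k : ℤ =>
      w m * w (k - m) * Real.cos (k * s + (2 * m - k) * t))) := by
    refine Summable.of_norm_bounded S3 (fun p => ?_)
    simp only [Function.uncurry]
    rw [Real.norm_eq_abs, abs_mul, abs_of_pos (mul_pos (w_pos _) (w_pos _))]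
    exact mul_le_of_le_one_right (mul_pos (w_pos _) (w_pos _)).le (Real.abs_cos_le_one _)
  rw [← S.tsum_comm]
  have S' : Summable (fun k : ℤ => ∑' m : ℤ, w m * w (k - m) * Real.cos (k * s + (2 * m - k) * t)) :=
    S.prod_symm.prod
  rw [tsum_int_split S']
  congr 1
  · congr 1; ext a
    rw [← (Equiv.addLeft a).tsum_eq]
    congr 1; ext b
    simp only [Equiv.coe_addLeft, w, wA, ← Real.exp_add]
    congr 2 <;> push_cast <;> ring
  · congr 1; ext a
    rw [← (Equiv.addLeft (a + 1)).tsum_eq]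
    congr 1; ext b
    simp only [Equiv.coe_addLeft, w, wB, ← Real.exp_add]
    congr 2 <;> push_cast <;> ring

lemma Th_per (t : ℝ) : Th (t + 2 * Real.pi) = Th t := by
  unfold Th; congr 1; ext n; rw [mul_add, Real.cos_add_int_mul_two_pi]
lemma Th_neg (t : ℝ) : Th (-t) = Th t := by
  unfold Th; congr 1; ext n; rw [mul_neg, Real.cos_neg]
lemma A_neg (t : ℝ) : A (-t) = A t := by
  unfold A; congr 1; ext n; rw [mul_neg, Real.cos_neg]
lemma B_neg (t : ℝ) : B (-t) = B t := by
  unfold B; congr 1; ext n; rw [mul_neg, Real.cos_neg]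
lemma A_pi (t : ℝ) : A (t + Real.pi) = A t := by
  unfold A; congr 1; ext n
  rw [show 2 * (n : ℝ) * (t + Real.pi) = 2 * n * t + n * (2 * Real.pi) by ring, Real.cos_add_int_mul_two_pi]
lemma B_pi (t : ℝ) : B (t + Real.pi) = - B t := by
  unfold B; rw [← tsum_neg]; congr 1; ext n
  rw [show (2 * (n : ℝ) + 1) * (t + Real.pi) = ((2 * n + 1) * t + Real.pi) + n * (2 * Real.pi) by ring,
    Real.cos_add_int_mul_two_pi, Real.cos_add_pi]
  ring

lemma CM : A 0 ^ 2 - B 0 ^ 2 = 2 * A 0 * B 0 := by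
  have h := Real.tsum_exp_neg_mul_int_sq (a := 2) two_pos
  have h1 : ∑' n : ℤ, Real.exp (-Real.pi * 2 * (n : ℝ) ^ 2) = A 0 := by
    unfold A wA; congr 1; ext n; simp only [mul_zero, Real.cos_zero, mul_one]; congr 1; ring
  have hs : Summable (fun n : ℤ => Real.exp (-Real.pi / 2 * (n : ℝ) ^ 2)) := by
    have := summable_gauss (c := Real.pi / 2) (a := 0) (by positivity) (by norm_num)
    simpa [neg_div] using this
  have h2 : ∑' n : ℤ, Real.exp (-Real.pi / 2 * (n : ℝ) ^ 2) = A 0 + B 0 := by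
    rw [tsum_int_split hs]
    unfold A B wA wB
    congr 1 <;> congr 1 <;> ext n <;> simp only [mul_zero, Real.cos_zero, mul_one] <;> congr 1 <;>
      push_cast <;> ring
  rw [h1, h2, ← Real.sqrt_eq_rpow] at h
  have h3 : Real.sqrt 2 ^ 2 = 2 := Real.sq_sqrt (by norm_num)
  have h4 : Real.sqrt 2 ≠ 0 := by positivity
  have h5 : Real.sqrt 2 * A 0 = A 0 + B 0 := by
    have := congrArg (fun z => Real.sqrt 2 * z) h
    rw [this, ← mul_assoc, mul_one_div_cancel h4, one_mul]
  have h6 : (Real.sqrt 2 * A 0) ^ 2 = (A 0 + B 0) ^ 2 := by rw [h5]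
  rw [mul_pow, h3] at h6
  linarith

end F51


namespace F51

noncomputable def q : ℝ := Real.exp (-Real.pi)
noncomputable def Q : ℝ := Real.exp (-(2 * Real.pi))

lemma q_pos : 0 < q := Real.exp_pos _
lemma q_lt_one : q < 1 := by
  unfold q; rw [Real.exp_lt_one_iff]; linarith [Real.pi_pos]
lemma Q_pos : 0 < Q := Real.exp_pos _
lemma Q_small : Q ≤ 1 / 3 := by
  unfold Q
  rw [Real.exp_neg, inv_le_comm₀ (Real.exp_pos _) (by norm_num)]
  have := Real.add_one_le_exp (2 * Real.pi)
  have := Real.pi_gt_three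
  norm_num; linarith

noncomputable def D (k : ℕ) : ℝ := ∏ i ∈ Finset.range k, (1 - Q ^ (i + 1))

lemma D_succ (k : ℕ) : D (k + 1) = D k * (1 - Q ^ (k + 1)) := Finset.prod_range_succ _ _

lemma Qpow_le (k : ℕ) : Q ^ (k + 1) ≤ 1 / 3 := by
  have h1 : Q ^ k ≤ 1 := pow_le_one₀ Q_pos.le (by linarith [Q_small])
  rw [pow_succ]
  nlinarith [Q_pos, Q_small]

lemma D_lower (k : ℕ) : 1 / 2 * (1 + Q ^ k) ≤ D k := by
  induction k with
  | zero => norm_num [D]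
  | succ k ih =>
    rw [D_succ]
    have h2 := Qpow_le k
    have h3 : 0 < Q ^ k := pow_pos Q_pos k
    have h4 : Q ^ (k + 1) = Q ^ k * Q := pow_succ _ _
    have h5 : 1 / 2 * (1 + Q ^ k) * (1 - Q ^ (k + 1)) ≤ D k * (1 - Q ^ (k + 1)) :=
      mul_le_mul_of_nonneg_right ih (by linarith)
    have h6 : 0 ≤ Q ^ k * (1 - 2 * Q - Q ^ (k + 1)) :=
      mul_nonneg h3.le (by linarith [Q_small])
    rw [h4] at h5 h6 ⊢
    nlinarith

lemma D_half (k : ℕ) : 1 / 2 ≤ D k := by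
  have := D_lower k
  have := pow_pos Q_pos k
  linarith
lemma D_pos (k : ℕ) : 0 < D k := by linarith [D_half k]
lemma D_anti : Antitone D := by
  apply antitone_nat_of_succ_le
  intro k
  rw [D_succ]
  exact mul_le_of_le_one_right (D_pos k).le (by linarith [pow_pos Q_pos (k + 1)])
lemma D_le_one (k : ℕ) : D k ≤ 1 := by
  have := D_anti (Nat.zero_le k)
  simpa [D] using this

lemma D_lim : ∃ d : ℝ, 0 < d ∧ Tendsto D atTop (nhds d) := by
  have h := tendsto_atTop_ciInf D_anti ⟨1 / 2, by rintro _ ⟨k, rfl⟩; exact D_half k⟩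
  refine ⟨_, ?_, h⟩
  have := ge_of_tendsto' h D_half
  linarith

noncomputable def g (k : ℤ) : ℝ := if k < 0 then 0 else (D k.toNat)⁻¹

lemma g_nonneg (k : ℤ) : 0 ≤ g k := by
  unfold g; split_ifs
  · exact le_rfl
  · exact (inv_pos.2 (D_pos _)).le
lemma g_le (k : ℤ) : g k ≤ 2 := by
  unfold g; split_ifs
  · norm_num
  · rw [inv_le_comm₀ (D_pos _) (by norm_num)]; linarith [D_half k.toNat]

lemma g_rec (k : ℤ) : g (k - 1) = (1 - Q ^ k) * g k := by
  rcases lt_trichotomy k 0 with h | h | h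
  · simp [g, h, show k - 1 < 0 by omega]
  · subst h; simp [g]
  · obtain ⟨m, rfl⟩ : ∃ m : ℕ, k = m + 1 := ⟨(k - 1).toNat, by omega⟩
    have e1 : g ((m : ℤ) + 1 - 1) = (D m)⁻¹ := by simp [g]
    have e2 : g ((m : ℤ) + 1) = (D (m + 1))⁻¹ := by
      unfold g; rw [if_neg (by omega)]; rfl
    rw [e1, e2, D_succ]
    have h1 : (1 : ℝ) - Q ^ (m + 1) ≠ 0 := by linarith [Qpow_le m]
    have h2 := (D_pos m).ne'
    rw [show Q ^ ((m : ℤ) + 1) = Q ^ (m + 1) by exact_mod_cast zpow_natCast Q (m + 1)]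
    field_simp

lemma g_lim {d : ℝ} (hd : 0 < d) (h : Tendsto D atTop (nhds d)) (n : ℤ) :
    Tendsto (fun N : ℕ => g (N + n)) atTop (nhds d⁻¹) := by
  have h1 : Tendsto (fun N : ℕ => ((N : ℤ) + n).toNat) atTop atTop := by
    apply tendsto_atTop.2
    intro b
    filter_upwards [eventually_ge_atTop (b + n.natAbs)] with N hN
    omega
  have h2 : Tendsto (fun N : ℕ => (D ((N : ℤ) + n).toNat)⁻¹) atTop (nhds d⁻¹) :=
    (h.comp h1).inv₀ hd.ne'
  refine h2.congr' ?_
  filter_upwards [eventually_ge_atTop n.natAbs] with N hN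
  unfold g; rw [if_neg (by omega)]

noncomputable def c (N : ℕ) (n : ℤ) : ℝ := D (2 * N) * g (N + n) * g (N - n)

lemma c_bound (N : ℕ) (n : ℤ) : |c N n| ≤ 4 := by
  unfold c
  have h1 := g_nonneg (N + n)
  have h2 := g_nonneg (N - n)
  rw [abs_of_nonneg (mul_nonneg (mul_nonneg (D_pos _).le h1) h2)]
  calc D (2 * N) * g (N + n) * g (N - n) ≤ 1 * 2 * 2 := by
        gcongr
        · exact D_le_one _
        · exact g_le _
        · exact g_le _
    _ = 4 := by norm_num

lemma c_rec (N : ℕ) (n : ℤ) : c (N + 1) n = (1 + Q ^ (2 * N + 1)) * c N n +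
    Q ^ ((N : ℤ) + 1 - n) * c N (n - 1) + Q ^ ((N : ℤ) + 1 + n) * c N (n + 1) := by
  unfold c
  have hQ := Q_pos.ne'
  set X := Q ^ ((N : ℤ) + 1 + n) with hX
  set Y := Q ^ ((N : ℤ) + 1 - n) with hY
  have hXY : Q ^ (2 * N + 1) * Q = X * Y := by
    rw [hX, hY, ← zpow_add₀ hQ, ← pow_succ, ← zpow_natCast]
    congr 1; push_cast; ring
  have e1 : g ((N : ℤ) + n) = (1 - X) * g (N + 1 + n) := by
    rw [← g_rec]; congr 1; ring
  have e2 : g ((N : ℤ) - n) = (1 - Y) * g (N + 1 - n) := by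
    rw [← g_rec]; congr 1; ring
  have e3 : g ((N : ℤ) + (n - 1)) = (1 - X / Q) * g (N + n) := by
    rw [show X / Q = Q ^ ((N : ℤ) + n) by
      rw [hX, div_eq_iff hQ, ← zpow_add_one₀ hQ]; congr 1; ring, ← g_rec]; congr 1; ring
  have e4 : g ((N : ℤ) - (n + 1)) = (1 - Y / Q) * g (N - n) := by
    rw [show Y / Q = Q ^ ((N : ℤ) - n) by
      rw [hY, div_eq_iff hQ, ← zpow_add_one₀ hQ]; congr 1; ring, ← g_rec]; congr 1; ring
  have e5 : g ((N : ℤ) - (n - 1)) = g (N + 1 - n) := by congr 1; ring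
  have e6 : g ((N : ℤ) + (n + 1)) = g (N + 1 + n) := by congr 1; ring
  have hD : D (2 * (N + 1)) = D (2 * N) * (1 - Q ^ (2 * N + 1)) * (1 - Q ^ (2 * N + 1) * Q) := by
    rw [show 2 * (N + 1) = 2 * N + 1 + 1 by ring, D_succ, D_succ, pow_succ Q (2 * N + 1)]
  rw [e3, e4, e5, e6, e1, e2, hD, hXY]
  have hZ : Q ^ (2 * N + 1) = X * Y / Q := by rw [eq_div_iff hQ, hXY]
  rw [hZ]
  push_cast
  field_simp
  ring

noncomputable def r (k : ℕ) : ℝ := q ^ (2 * k + 1)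

noncomputable def P (N : ℕ) (t : ℝ) : ℝ :=
  ∏ k ∈ Finset.range N, (1 + 2 * r k * Real.cos t + r k ^ 2)

lemma Q_zpow (n : ℤ) : Q ^ n = Real.exp (-(2 * Real.pi) * n) := by
  unfold Q; rw [Real.exp_mul, Real.rpow_intCast]

lemma r_exp (k : ℕ) : r k = Real.exp (-Real.pi * (2 * k + 1)) := by
  unfold r q; rw [← Real.exp_nat_mul]; congr 1; push_cast; ring

lemma w_shift1 (N : ℕ) (n : ℤ) : r N * w (n - 1) = Q ^ ((N : ℤ) + 1 - n) * w n := by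
  rw [r_exp, Q_zpow, w, w, ← Real.exp_add, ← Real.exp_add]; congr 1; push_cast; ring
lemma w_shift2 (N : ℕ) (n : ℤ) : r N * w (n + 1) = Q ^ ((N : ℤ) + 1 + n) * w n := by
  rw [r_exp, Q_zpow, w, w, ← Real.exp_add, ← Real.exp_add]; congr 1; push_cast; ring
lemma r_sq (N : ℕ) : r N ^ 2 = Q ^ (2 * N + 1) := by
  rw [r_exp, Q, ← Real.exp_nat_mul, ← Real.exp_nat_mul]; congr 1; push_cast; ring

lemma cw_bound (N : ℕ) (n : ℤ) (x : ℝ) : ‖c N n * (w n * Real.cos x)‖ ≤ 4 * w n := by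
  rw [Real.norm_eq_abs, abs_mul, abs_mul, abs_of_pos (w_pos n)]
  have h1 := c_bound N n
  have h2 := Real.abs_cos_le_one x
  have h3 := w_pos n
  have : w n * |Real.cos x| ≤ w n := mul_le_of_le_one_right h3.le h2
  exact mul_le_mul h1 this (by positivity) (by norm_num)

lemma summable_cw (N : ℕ) (x : ℤ → ℝ) : Summable (fun n : ℤ => c N n * (w n * Real.cos (x n))) :=
  Summable.of_norm_bounded (summable_w.mul_left 4) (fun n => cw_bound N n _)

lemma P_series (N : ℕ) (t : ℝ) : P N t = ∑' n : ℤ, c N n * (w n * Real.cos (n * t)) := by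
  induction N with
  | zero =>
    rw [tsum_eq_single 0]
    · simp [P, c, D, g, w]
    · intro n hn
      have : c 0 n = 0 := by
        unfold c g
        rcases lt_or_gt_of_ne hn with h | h
        · simp [h]
        · simp [h]
      simp [this]
  | succ N ih =>
    have hP : P (N + 1) t = P N t * (1 + 2 * r N * Real.cos t + r N ^ 2) := Finset.prod_range_succ _ _
    have S0 := summable_cw N (fun n => n * t)
    have S1 := summable_cw N (fun n => (n + 1) * t)
    have S2 := summable_cw N (fun n => (n - 1) * t)
    have E1 : ∑' n : ℤ, c N n * (w n * Real.cos ((n + 1) * t)) =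
        ∑' n : ℤ, c N (n - 1) * (w (n - 1) * Real.cos (n * t)) := by
      rw [← (Equiv.subRight (1 : ℤ)).tsum_eq]
      simp
    have E2 : ∑' n : ℤ, c N n * (w n * Real.cos ((n - 1) * t)) =
        ∑' n : ℤ, c N (n + 1) * (w (n + 1) * Real.cos (n * t)) := by
      rw [← (Equiv.addRight (1 : ℤ)).tsum_eq]
      simp
    have S1' : Summable (fun n : ℤ => c N (n - 1) * (w (n - 1) * Real.cos (n * t))) := by
      have := (Equiv.subRight (1 : ℤ)).summable_iff.2 S1
      simpa [Function.comp_def] using this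
    have S2' : Summable (fun n : ℤ => c N (n + 1) * (w (n + 1) * Real.cos (n * t))) := by
      have := (Equiv.addRight (1 : ℤ)).summable_iff.2 S2
      simpa [Function.comp_def] using this
    have E0 : 2 * Real.cos t * ∑' n : ℤ, c N n * (w n * Real.cos (n * t)) =
        ∑' n : ℤ, c N (n - 1) * (w (n - 1) * Real.cos (n * t)) +
        ∑' n : ℤ, c N (n + 1) * (w (n + 1) * Real.cos (n * t)) := by
      rw [← E1, ← E2, ← S1.tsum_add S2, ← tsum_mul_left]
      congr 1; ext n
      rw [add_mul, sub_mul, one_mul, Real.cos_add, Real.cos_sub]; ring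
    have R : ∀ n : ℤ, c (N + 1) n * (w n * Real.cos (n * t)) =
        (1 + r N ^ 2) * (c N n * (w n * Real.cos (n * t))) +
        (r N * (c N (n - 1) * (w (n - 1) * Real.cos (n * t))) +
        r N * (c N (n + 1) * (w (n + 1) * Real.cos (n * t)))) := by
      intro n
      rw [c_rec, r_sq]
      linear_combination (-c N (n - 1) * Real.cos (n * t)) * w_shift1 N n +
        (-c N (n + 1) * Real.cos (n * t)) * w_shift2 N n
    simp_rw [R]
    rw [(S0.mul_left _).tsum_add ((S1'.mul_left _).add (S2'.mul_left _)),
      (S1'.mul_left _).tsum_add (S2'.mul_left _), tsum_mul_left, tsum_mul_left, tsum_mul_left, hP, ih]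
    linear_combination r N * E0

lemma P_lim : ∃ C : ℝ, 0 < C ∧ ∀ t, Tendsto (fun N => P N t) atTop (nhds (C * Th t)) := by
  obtain ⟨d, hd, h⟩ := D_lim
  refine ⟨d⁻¹, inv_pos.2 hd, fun t => ?_⟩
  simp_rw [P_series]
  unfold Th
  rw [← tsum_mul_left]
  refine tendsto_tsum_of_dominated_convergence (summable_w.mul_left 4) (fun n => ?_)
    (Eventually.of_forall fun N n => cw_bound N n _)
  apply Tendsto.mul_const
  have h2 : Tendsto (fun N : ℕ => D (2 * N)) atTop (nhds d) :=
    h.comp (tendsto_id.const_mul_atTop' two_pos)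
  have := (h2.mul (g_lim hd h n)).mul (g_lim hd h (-n))
  rw [mul_inv_cancel₀ hd.ne', one_mul] at this
  exact this

end F51


namespace F51

lemma hs_of {ι : Type*} {f g : ι → ℝ} {a b : ℝ} (h : HasSum f a) (hf : ∀ i, g i = f i) (hb : b = a) :
    HasSum g b := by
  rw [hb, show g = f from funext hf]; exact h

lemma summable_inv_sq_nat (a : ℝ) : Summable (fun n : ℕ => 1 / (((n : ℝ) + 1) ^ 2 + a ^ 2)) := by
  have h : Summable (fun n : ℕ => 1 / ((n : ℝ) + 1) ^ 2) := by
    have := (summable_nat_add_iff 1).2 (Real.summable_one_div_nat_pow.2 (one_lt_two))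
    simpa using this
  refine Summable.of_nonneg_of_le (fun n => by positivity) (fun n => ?_) h
  apply one_div_le_one_div_of_le (by positivity)
  nlinarith [sq_nonneg a]

lemma nat_sum {a : ℝ} (ha : a ≠ 0) : 2 * a * ∑' n : ℕ, 1 / (((n : ℝ) + 1) ^ 2 + a ^ 2) =
    Real.pi * (Real.cosh (Real.pi * a) / Real.sinh (Real.pi * a)) - 1 / a := by
  have hx : (a * Complex.I : ℂ) ∈ Complex.integerComplement := by
    rw [Complex.mem_integerComplement_iff]
    rintro ⟨n, hn⟩
    have := congrArg Complex.im hn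
    simp at this
    exact ha this.symm
  have h := cot_series_rep' hx
  have e : ∀ n : ℕ, 1 / ((a * Complex.I : ℂ) - (n + 1)) + 1 / ((a * Complex.I : ℂ) + (n + 1)) =
      (-2 * a * Complex.I) * ((1 / (((n : ℝ) + 1) ^ 2 + a ^ 2) : ℝ) : ℂ) := by
    intro n
    have h1 : (a * Complex.I : ℂ) - (n + 1) ≠ 0 := by
      intro h; have := congrArg Complex.im h; simp at this; exact ha this
    have h2 : (a * Complex.I : ℂ) + (n + 1) ≠ 0 := by
      intro h; have := congrArg Complex.im h; simp at this; exact ha this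
    have h3 : ((n : ℂ) + 1) ^ 2 + a ^ 2 ≠ 0 := by
      have : (((n : ℝ) + 1) ^ 2 + a ^ 2 : ℝ) ≠ 0 := by positivity
      exact_mod_cast this
    push_cast
    field_simp
    ring_nf
    simp only [Complex.I_sq, Complex.I_pow_three]
    ring
  simp_rw [e] at h
  rw [tsum_mul_left, ← Complex.ofReal_tsum] at h
  set S := ∑' n : ℕ, 1 / (((n : ℝ) + 1) ^ 2 + a ^ 2)
  have hs : Real.sinh (Real.pi * a) ≠ 0 := by
    rw [Ne, Real.sinh_eq_zero]; exact mul_ne_zero Real.pi_ne_zero ha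
  have hc : Complex.cot (Real.pi * (a * Complex.I)) =
      (Real.cosh (Real.pi * a) : ℂ) / ((Real.sinh (Real.pi * a) : ℂ) * Complex.I) := by
    rw [Complex.cot, ← mul_assoc, Complex.cos_mul_I, Complex.sin_mul_I]
    push_cast; rfl
  rw [hc] at h
  have hsC : (Real.sinh (Real.pi * a) : ℂ) ≠ 0 := by exact_mod_cast hs
  have haC : (a : ℂ) ≠ 0 := by exact_mod_cast ha
  have hI := Complex.I_ne_zero
  have key : ((2 * a * S : ℝ) : ℂ) =
      ((Real.pi * (Real.cosh (Real.pi * a) / Real.sinh (Real.pi * a)) - 1 / a : ℝ) : ℂ) := by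
    have h' := congrArg (fun z => z * Complex.I) h
    have r1 : -2 * (a : ℂ) * Complex.I * S * Complex.I = 2 * a * S := by
      linear_combination (-2 * (a : ℂ) * S) * Complex.I_sq
    rw [r1] at h'
    push_cast at h' ⊢
    rw [← h']
    field_simp
  exact_mod_cast key

lemma hasSum_int_inv {a : ℝ} (ha : a ≠ 0) : HasSum (fun m : ℤ => 1 / ((m : ℝ) ^ 2 + a ^ 2))
    (Real.pi / a * (Real.cosh (Real.pi * a) / Real.sinh (Real.pi * a))) := by
  have h := (summable_inv_sq_nat a).hasSum
  have h2 := HasSum.of_add_one_of_neg_add_one (f := fun m : ℤ => 1 / ((m : ℝ) ^ 2 + a ^ 2))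
    (m := ∑' n : ℕ, 1 / (((n : ℝ) + 1) ^ 2 + a ^ 2)) (m' := ∑' n : ℕ, 1 / (((n : ℝ) + 1) ^ 2 + a ^ 2))
    (by simpa using h) (by
      refine hs_of h (fun n => ?_) rfl; push_cast; congr 2; ring)
  refine hs_of h2 (fun _ => rfl) ?_
  have := nat_sum ha
  set S := ∑' n : ℕ, 1 / (((n : ℝ) + 1) ^ 2 + a ^ 2)
  have e : S = (Real.pi * (Real.cosh (Real.pi * a) / Real.sinh (Real.pi * a)) - 1 / a) / (2 * a) := by
    rw [← this]; field_simp
  rw [e]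
  have hs : Real.sinh (Real.pi * a) ≠ 0 := by
    rw [Ne, Real.sinh_eq_zero]; exact mul_ne_zero Real.pi_ne_zero ha
  simp only [Int.cast_zero]
  field_simp
  ring

lemma inner_sum {a : ℝ} (ha : a ≠ 0) (n : ℤ) :
    ∑' m : ℤ, (-1 : ℝ) ^ (m + n) / ((m : ℝ) ^ 2 + a ^ 2) =
      (-1) ^ n * (Real.pi / (a * Real.sinh (Real.pi * a))) := by
  have E := hasSum_int_inv ha
  have e := (hasSum_int_inv (a := a / 2) (by simpa using ha)).mul_left (1 / 4)
  have e' : HasSum (fun k : ℤ => 1 / (((2 * k : ℤ) : ℝ) ^ 2 + a ^ 2)) (1 / 4 *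
      (Real.pi / (a / 2) * (Real.cosh (Real.pi * (a / 2)) / Real.sinh (Real.pi * (a / 2))))) := by
    refine hs_of e (fun k => ?_) rfl; push_cast
    have : (k : ℝ) ^ 2 + (a / 2) ^ 2 ≠ 0 := by positivity
    rw [show (2 * (k : ℝ)) ^ 2 + a ^ 2 = 4 * ((k : ℝ) ^ 2 + (a / 2) ^ 2) by ring]
    field_simp
  have i1 : Function.Injective (fun k : ℤ => 2 * k + 1) := fun x y h => by simpa using h
  have o := (E.summable.comp_injective i1).hasSum
  have o' : HasSum (fun k : ℤ => 1 / (((2 * k + 1 : ℤ) : ℝ) ^ 2 + a ^ 2))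
      (∑' k : ℤ, 1 / (((2 * k + 1 : ℤ) : ℝ) ^ 2 + a ^ 2)) := o
  have tot := (hasSum_int_split (f := fun m : ℤ => 1 / ((m : ℝ) ^ 2 + a ^ 2)) e' o').unique E
  have f1 : HasSum (fun k : ℤ => (-1 : ℝ) ^ (2 * k) * (1 / (((2 * k : ℤ) : ℝ) ^ 2 + a ^ 2))) _ :=
    hs_of e' (fun k => by rw [zpow_mul]; norm_num) rfl
  have f2 : HasSum (fun k : ℤ => (-1 : ℝ) ^ (2 * k + 1) * (1 / (((2 * k + 1 : ℤ) : ℝ) ^ 2 + a ^ 2))) _ :=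
    hs_of o'.neg (fun k => by rw [zpow_add₀ (by norm_num), zpow_mul]; simp) rfl
  have f0 := hasSum_int_split (f := fun m : ℤ => (-1 : ℝ) ^ m * (1 / ((m : ℝ) ^ 2 + a ^ 2))) f1 f2
  have : ∀ m : ℤ, (-1 : ℝ) ^ (m + n) / ((m : ℝ) ^ 2 + a ^ 2) =
      (-1) ^ n * ((-1 : ℝ) ^ m * (1 / ((m : ℝ) ^ 2 + a ^ 2))) := by
    intro m; rw [zpow_add₀ (by norm_num)]; ring
  simp_rw [this]
  rw [tsum_mul_left, f0.tsum_eq]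
  congr 1
  rw [← eq_sub_iff_add_eq'] at tot
  rw [tot]
  set x := Real.pi * (a / 2) with hx
  have hx2 : Real.pi * a = 2 * x := by rw [hx]; ring
  have hxs : Real.sinh x ≠ 0 := by
    rw [Ne, Real.sinh_eq_zero]; positivity
  have hxc : Real.cosh x ≠ 0 := (Real.cosh_pos x).ne'
  rw [hx2, Real.sinh_two_mul, Real.cosh_two_mul]
  have := Real.cosh_sq x
  field_simp
  rw [this]
  ring

lemma log_series {r t : ℝ} (h0 : 0 < r) (h1 : r < 1) :
    HasSum (fun j : ℕ => (-1 : ℝ) ^ (j + 1) * r ^ j * (2 * Real.cos (j * t)) / j)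
      (Real.log (1 + 2 * r * Real.cos t + r ^ 2)) := by
  have hz : ‖(r : ℂ) * Complex.exp (t * Complex.I)‖ < 1 := by
    rw [norm_mul, Complex.norm_exp_ofReal_mul_I, mul_one, Complex.norm_real, Real.norm_eq_abs, abs_of_pos h0]
    exact h1
  have h := (Complex.hasSum_re (Complex.hasSum_taylorSeries_log hz)).mul_left 2
  refine hs_of h (fun j => ?_) ?_
  · have : (-1 : ℂ) ^ (j + 1) * ((r : ℂ) * Complex.exp (t * Complex.I)) ^ j / j =
        (((-1 : ℝ) ^ (j + 1) * r ^ j / j : ℝ) : ℂ) * Complex.exp (((j * t : ℝ) : ℂ) * Complex.I) := by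
      rw [mul_pow, ← Complex.exp_nat_mul]
      push_cast
      rw [mul_assoc (j : ℂ)]
      ring
    rw [this, Complex.re_ofReal_mul, Complex.exp_ofReal_mul_I_re]
    ring
  · rw [Complex.log_re]
    have : 1 + 2 * r * Real.cos t + r ^ 2 = ‖1 + (r : ℂ) * Complex.exp (t * Complex.I)‖ ^ 2 := by
      rw [← Complex.normSq_eq_norm_sq, Complex.normSq_apply]
      simp [Complex.exp_ofReal_mul_I_re, Complex.exp_ofReal_mul_I_im]
      nlinarith [Real.sin_sq_add_cos_sq t]
    rw [this, Real.log_pow]; norm_num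

lemma r_pos (k) : 0 < r k := pow_pos q_pos _
lemma r_lt (k) : r k < 1 := pow_lt_one₀ q_pos.le q_lt_one (by omega)

noncomputable def ell (k : ℕ) (t : ℝ) : ℝ := Real.log (1 + 2 * r k * Real.cos t + r k ^ 2)

lemma fac_pos (k : ℕ) (t : ℝ) : 0 < 1 + 2 * r k * Real.cos t + r k ^ 2 := by
  have h1 := r_pos k
  have h2 := r_lt k
  have := Real.neg_one_le_cos t
  nlinarith [sq_pos_of_pos (sub_pos.2 h2)]

lemma geom (j : ℕ) (hj : j ≠ 0) :
    HasSum (fun k : ℕ => r k ^ j) (1 / (2 * Real.sinh (Real.pi * j))) := by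
  have hq : q ^ (2 * j) < 1 := pow_lt_one₀ q_pos.le q_lt_one (by omega)
  have h := (hasSum_geometric_of_lt_one (pow_pos q_pos (2 * j)).le hq).mul_left (q ^ j)
  refine hs_of h (fun k => ?_) ?_
  · unfold r; rw [← pow_mul, ← pow_mul, ← pow_add]; congr 1; ring
  · have e1 : Real.exp (-(Real.pi * j)) = q ^ j := by
      unfold q; rw [← Real.exp_nat_mul]; congr 1; ring
    have e2 : Real.exp (Real.pi * j) = (q ^ j)⁻¹ := by rw [← e1, Real.exp_neg, inv_inv]
    rw [Real.sinh_eq, e1, e2]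
    have h3 : q ^ j ≠ 0 := (pow_pos q_pos j).ne'
    have h4 : 1 - q ^ (2 * j) ≠ 0 := by linarith
    rw [show 2 * j = j * 2 by ring, pow_mul] at h4 ⊢
    have h5 : (q ^ j)⁻¹ - q ^ j ≠ 0 := by
      intro h; apply h4; field_simp at h; linarith
    rw [one_div, ← div_eq_mul_inv, eq_div_iff h4, inv_mul_eq_iff_eq_mul₀ (by simpa using h5)]
    field_simp

noncomputable def L (t : ℝ) : ℝ := ∑' k, ell k t

lemma L_both (t : ℝ) : HasSum (fun k => ell k t) (L t) ∧
    HasSum (fun j : ℕ => (-1 : ℝ) ^ (j + 1) / (j * Real.sinh (Real.pi * j)) * Real.cos (j * t)) (L t) := by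
  obtain ⟨F, hFdef⟩ : ∃ F : ℕ × ℕ → ℝ, ∀ k j : ℕ, F (k, j) =
    (-1 : ℝ) ^ (j + 1) * r k ^ j * (2 * Real.cos (j * t)) / j :=
    ⟨fun p => (-1 : ℝ) ^ (p.2 + 1) * r p.1 ^ p.2 * (2 * Real.cos (p.2 * t)) / p.2, fun _ _ => rfl⟩
  have hg := summable_geometric_of_lt_one q_pos.le q_lt_one
  have hb : Summable (fun p : ℕ × ℕ => 2 * (q ^ p.1 * q ^ p.2)) :=
    (summable_mul_of_summable_norm hg.norm hg.norm).mul_left 2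
  have hF : Summable F := by
    refine Summable.of_norm_bounded hb ?_
    rintro ⟨k, j⟩
    rw [hFdef]
    rcases Nat.eq_zero_or_pos j with rfl | hj
    · have := q_pos; simp; positivity
    · have h1 : r k ^ j ≤ q ^ k * q ^ j := by
        unfold r; rw [← pow_mul, ← pow_add]
        apply pow_le_pow_of_le_one q_pos.le q_lt_one.le
        nlinarith
      have h2 := Real.abs_cos_le_one (j * t)
      have h3 : (1 : ℝ) ≤ j := by exact_mod_cast hj
      have h4 : 0 < r k ^ j := pow_pos (r_pos k) j
      rw [Real.norm_eq_abs, abs_div, abs_mul, abs_mul, abs_mul, abs_pow, abs_neg, abs_one, one_pow,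
        abs_of_pos h4, abs_of_pos (by linarith : (0 : ℝ) < j), abs_of_pos (two_pos : (0 : ℝ) < 2)]
      rw [div_le_iff₀ (by linarith)]
      have h5 : 1 * r k ^ j * (2 * |Real.cos (j * t)|) ≤ 2 * r k ^ j := by nlinarith
      nlinarith
  have fib1 : ∀ k : ℕ, HasSum (fun j : ℕ => F (k, j)) (ell k t) := fun k =>
    hs_of (log_series (r_pos k) (r_lt k)) (fun j => hFdef k j) rfl
  have H1 : HasSum (fun k => ell k t) (∑' p, F p) := hF.hasSum.prod_fiberwise fib1
  have HL : L t = ∑' p, F p := by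
    unfold L; exact H1.tsum_eq
  refine ⟨by rw [HL]; exact H1, ?_⟩
  rw [HL]
  have hsw : HasSum (F ∘ Prod.swap) (∑' p, F p) := by
    have := (Equiv.prodComm ℕ ℕ).hasSum_iff (f := F) (a := ∑' p, F p)
    exact this.2 hF.hasSum
  have fib : ∀ j : ℕ, HasSum (fun k : ℕ => (F ∘ Prod.swap) (j, k))
      ((-1 : ℝ) ^ (j + 1) / (j * Real.sinh (Real.pi * j)) * Real.cos (j * t)) := by
    intro j
    simp only [Function.comp_def, Prod.swap, hFdef]
    rcases Nat.eq_zero_or_pos j with rfl | hj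
    · simp [hasSum_zero]
    · have hs : Real.sinh (Real.pi * j) ≠ 0 := by
        rw [Ne, Real.sinh_eq_zero]; positivity
      have := (geom j hj.ne').mul_left ((-1 : ℝ) ^ (j + 1) * (2 * Real.cos (j * t)) / j)
      refine hs_of this (fun k => ?_) ?_
      · ring
      · field_simp
  exact hsw.prod_fiberwise fib

lemma Th_exp : ∃ C : ℝ, 0 < C ∧ ∀ t, C * Th t = Real.exp (L t) := by
  obtain ⟨C, hC, h⟩ := P_lim
  refine ⟨C, hC, fun t => tendsto_nhds_unique (h t) ?_⟩
  have h1 := (L_both t).1.tendsto_sum_nat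
  have h2 := (Real.continuous_exp.tendsto _).comp h1
  refine h2.congr (fun N => ?_)
  simp only [Function.comp, Real.exp_sum, P, ell]
  exact Finset.prod_congr rfl (fun k _ => Real.exp_log (fac_pos k t))

lemma L_lt {s t : ℝ} (h : Real.cos s < Real.cos t) : L s < L t := by
  have hk : ∀ k, ell k s < ell k t := fun k =>
    Real.log_lt_log (fac_pos k s) (by nlinarith [r_pos k])
  exact hasSum_lt (fun k => (hk k).le) (hk 0) (L_both s).1 (L_both t).1

end F51


namespace F51

lemma alg1 {A0 B0 A1 B1 A2 B2 T U W0 W1 W2 : ℝ} (h00 : A0 ^ 2 + B0 ^ 2 = 1)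
    (h11 : A1 ^ 2 + B1 ^ 2 = U) (h22 : A2 ^ 2 + B2 ^ 2 = T) (h10 : A1 * A0 + B1 * B0 = T ^ 2)
    (h20 : A2 * A0 + B2 * B0 = U ^ 2) (h12 : A2 * A1 + B2 * B1 = U * T)
    (w0 : W0 ^ 2 = A0 ^ 2 - B0 ^ 2) (w1 : W1 * W0 = A1 ^ 2 - B1 ^ 2)
    (w1' : W1 ^ 2 = A2 * A0 - B2 * B0) (w2 : W2 * W0 = A2 ^ 2 - B2 ^ 2)
    (w2' : W2 ^ 2 = A1 * A0 - B1 * B0) (cm : A0 ^ 2 - B0 ^ 2 = 2 * A0 * B0)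
    (hT : 0 < T) (hU : 0 < U) (hTU : T ≠ U) :
    4 * (T * U) ^ 2 - 2 * (T * U) - 1 = 0 ∧
      T ^ 5 + U ^ 5 = T * U - (T * U) ^ 2 + 2 * (T * U) ^ 3 := by
  obtain ⟨b1, hb1⟩ : ∃ b1, b1 = A1 * B0 - B1 * A0 := ⟨_, rfl⟩
  obtain ⟨b2, hb2⟩ : ∃ b2, b2 = A2 * B0 - B2 * A0 := ⟨_, rfl⟩
  have e1 : T ^ 4 + b1 ^ 2 = U := by
    have : (T ^ 2) ^ 2 + b1 ^ 2 = (A1 ^ 2 + B1 ^ 2) * (A0 ^ 2 + B0 ^ 2) := by rw [← h10, hb1]; ring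
    rw [h11, h00] at this; linarith
  have e2 : U ^ 4 + b2 ^ 2 = T := by
    have : (U ^ 2) ^ 2 + b2 ^ 2 = (A2 ^ 2 + B2 ^ 2) * (A0 ^ 2 + B0 ^ 2) := by rw [← h20, hb2]; ring
    rw [h22, h00] at this; linarith
  have e3 : T ^ 2 * U ^ 2 + b1 * b2 = U * T := by
    have : T ^ 2 * U ^ 2 + b1 * b2 = (A2 * A1 + B2 * B1) * (A0 ^ 2 + B0 ^ 2) := by
      rw [← h10, ← h20, hb1, hb2]; ring
    rw [h12, h00] at this; linarith
  obtain ⟨K, hK⟩ : ∃ K, K = A0 ^ 2 - B0 ^ 2 := ⟨_, rfl⟩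
  have hK0 : K ≠ 0 := by
    intro h
    have h1 : 2 * A0 * B0 = 0 := by rw [← cm, ← hK, h]
    have h2 : (A0 ^ 2 + B0 ^ 2) ^ 2 = K ^ 2 + (2 * A0 * B0) ^ 2 := by rw [hK]; ring
    rw [h00, h, h1] at h2
    norm_num at h2
  have cA1 : A1 = A0 * T ^ 2 + B0 * b1 := by
    rw [← h10, hb1]; linear_combination (-A1) * h00
  have cB1 : B1 = B0 * T ^ 2 - A0 * b1 := by
    rw [← h10, hb1]; linear_combination (-B1) * h00
  have cA2 : A2 = A0 * U ^ 2 + B0 * b2 := by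
    rw [← h20, hb2]; linear_combination (-A2) * h00
  have cB2 : B2 = B0 * U ^ 2 - A0 * b2 := by
    rw [← h20, hb2]; linear_combination (-B2) * h00
  have q1 : A1 ^ 2 - B1 ^ 2 = K * (T ^ 4 - b1 ^ 2 + 2 * T ^ 2 * b1) := by
    rw [cA1, cB1, hK]; linear_combination (-2 * T ^ 2 * b1) * cm
  have q2 : A2 ^ 2 - B2 ^ 2 = K * (U ^ 4 - b2 ^ 2 + 2 * U ^ 2 * b2) := by
    rw [cA2, cB2, hK]; linear_combination (-2 * U ^ 2 * b2) * cm
  have q3 : A1 * A0 - B1 * B0 = K * (T ^ 2 + b1) := by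
    rw [cA1, cB1, hK]; linear_combination (-b1) * cm
  have q4 : A2 * A0 - B2 * B0 = K * (U ^ 2 + b2) := by
    rw [cA2, cB2, hK]; linear_combination (-b2) * cm
  have d1 : (T ^ 4 - b1 ^ 2 + 2 * T ^ 2 * b1) ^ 2 = U ^ 2 + b2 := by
    have : (W1 * W0) ^ 2 = W1 ^ 2 * W0 ^ 2 := by ring
    rw [w1, w1', w0, ← hK, q1, q4] at this
    have h2 : K ^ 2 * ((T ^ 4 - b1 ^ 2 + 2 * T ^ 2 * b1) ^ 2 - (U ^ 2 + b2)) = 0 := by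
      linear_combination this
    rcases mul_eq_zero.1 h2 with h | h
    · exact absurd h (pow_ne_zero 2 hK0)
    · linarith
  have d2 : (U ^ 4 - b2 ^ 2 + 2 * U ^ 2 * b2) ^ 2 = T ^ 2 + b1 := by
    have : (W2 * W0) ^ 2 = W2 ^ 2 * W0 ^ 2 := by ring
    rw [w2, w2', w0, ← hK, q2, q3] at this
    have h2 : K ^ 2 * ((U ^ 4 - b2 ^ 2 + 2 * U ^ 2 * b2) ^ 2 - (T ^ 2 + b1)) = 0 := by
      linear_combination this
    rcases mul_eq_zero.1 h2 with h | h
    · exact absurd h (pow_ne_zero 2 hK0)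
    · linarith
  have f1 : b2 = 4 * T ^ 2 * b1 * (T ^ 4 - b1 ^ 2) := by
    linear_combination (-1) * d1 + (T ^ 4 + b1 ^ 2 + U) * e1
  have f2 : b1 = 4 * U ^ 2 * b2 * (U ^ 4 - b2 ^ 2) := by
    linear_combination (-1) * d2 + (U ^ 4 + b2 ^ 2 + T) * e2
  have g2 : T ^ 5 + U ^ 5 = T * U - (T * U) ^ 2 + 2 * (T * U) ^ 3 := by
    have h1 : b1 ^ 2 = U - T ^ 4 := by linarith
    have h2 : b2 ^ 2 = T - U ^ 4 := by linarith
    have h3 : b1 * b2 = U * T - T ^ 2 * U ^ 2 := by linarith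
    have h4 : (U - T ^ 4) * (T - U ^ 4) = (U * T - T ^ 2 * U ^ 2) ^ 2 := by
      rw [← h1, ← h2, ← h3]; ring
    linear_combination (-1) * h4
  refine ⟨?_, g2⟩
  obtain ⟨x, hx⟩ : ∃ x, x = b1 / T ^ 2 := ⟨_, rfl⟩
  obtain ⟨y, hy⟩ : ∃ y, y = b2 / U ^ 2 := ⟨_, rfl⟩
  have hb1x : b1 = x * T ^ 2 := by rw [hx]; field_simp
  have hb2y : b2 = y * U ^ 2 := by rw [hy]; field_simp
  rw [hb1x] at e1 e3 f1 f2
  rw [hb2y] at e2 e3 f1 f2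
  have k1 : U = T ^ 4 * (1 + x ^ 2) := by linarith
  have k2 : T = U ^ 4 * (1 + y ^ 2) := by linarith
  have k3 : T * U * (1 + x * y) = 1 := by
    have : (T * U) * (T * U * (1 + x * y) - 1) = 0 := by linear_combination e3
    rcases mul_eq_zero.1 this with h | h
    · exact absurd h (by positivity)
    · linarith
  have m1 : y * (1 + x ^ 2) ^ 2 = 4 * x * (1 - x ^ 2) := by
    have : T ^ 8 * (y * (1 + x ^ 2) ^ 2 - 4 * x * (1 - x ^ 2)) = 0 := by
      linear_combination f1 - y * (U + T ^ 4 * (1 + x ^ 2)) * k1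
    rcases mul_eq_zero.1 this with h | h
    · exact absurd h (by positivity)
    · linarith
  have m2 : x * (1 + y ^ 2) ^ 2 = 4 * y * (1 - y ^ 2) := by
    have : U ^ 8 * (x * (1 + y ^ 2) ^ 2 - 4 * y * (1 - y ^ 2)) = 0 := by
      linear_combination f2 - x * (T + U ^ 4 * (1 + y ^ 2)) * k2
    rcases mul_eq_zero.1 this with h | h
    · exact absurd h (by positivity)
    · linarith
  have m3 : (y ^ 2 - x ^ 2) * (1 - (x * y) ^ 2 - 4 * (x * y)) = 0 := by
    linear_combination y * m1 - x * m2
  have m4 : y ^ 2 - x ^ 2 ≠ 0 := by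
    intro h
    have h1 : U ^ 5 = T ^ 5 := by
      have : y ^ 2 = x ^ 2 := by linarith
      rw [this] at k2
      calc U ^ 5 = U ^ 4 * U := by ring
        _ = U ^ 4 * (T ^ 4 * (1 + x ^ 2)) := by rw [← k1]
        _ = T ^ 4 * (U ^ 4 * (1 + x ^ 2)) := by ring
        _ = T ^ 4 * T := by rw [← k2]
        _ = T ^ 5 := by ring
    exact hTU ((pow_left_inj₀ hT.le hU.le (by norm_num)).1 h1.symm)
  have m5 := (mul_eq_zero.1 m3).resolve_left m4
  have hp : 0 < T * U := by positivity
  have k4 : (T * U) * (x * y) = 1 - T * U := by linarith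
  have : (T * U) ^ 2 * (1 - (x * y) ^ 2 - 4 * (x * y)) = 0 := by rw [m5, mul_zero]
  have k5 : (T * U) ^ 2 - ((T * U) * (x * y)) ^ 2 - 4 * (T * U) * ((T * U) * (x * y)) = 0 := by
    linear_combination this
  rw [k4] at k5
  linear_combination k5

lemma sqrt5 : Real.sqrt 5 ^ 2 = 5 := Real.sq_sqrt (by norm_num)

lemma alg2 {a b : ℝ} (hb : 0 < b) (hab : b < a)
    (h1 : 4 * (a * b) ^ 2 - 2 * (a * b) - 1 = 0)
    (h2 : a ^ 5 + b ^ 5 = a * b - (a * b) ^ 2 + 2 * (a * b) ^ 3) :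
    Real.sqrt 5 - 1 = (a * b)⁻¹ ∧
    -19 + 9 * Real.sqrt 5 - 3 * Real.sqrt (85 - 38 * Real.sqrt 5) = (b / a) ^ 5 := by
  have ha : 0 < a := hb.trans hab
  have hs := sqrt5
  have hs0 : 0 ≤ Real.sqrt 5 := Real.sqrt_nonneg 5
  have hs1 : Real.sqrt 5 < 2.237 := by
    rw [Real.sqrt_lt' (by norm_num)]; norm_num
  have hs2 : 2.236 < Real.sqrt 5 := by
    rw [Real.lt_sqrt (by norm_num)]; norm_num
  have hr0 : 0 ≤ 85 - 38 * Real.sqrt 5 := by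
    have : Real.sqrt 5 ≤ 85 / 38 := by
      rw [Real.sqrt_le_left (by norm_num)]; norm_num
    linarith
  set s := Real.sqrt 5 with hsdef
  obtain ⟨p, hp⟩ : ∃ p, p = a * b := ⟨_, rfl⟩
  rw [← hp] at h1 h2 ⊢
  have hp0 : 0 < p := by rw [hp]; positivity
  have hpv : p = (1 + s) / 4 := by
    have : (4 * p - (1 + s)) * (4 * p + (s - 1)) = 0 := by linear_combination 4 * h1 - hs
    rcases mul_eq_zero.1 this with h | h
    · linarith
    · exfalso; linarith
  refine ⟨?_, ?_⟩
  · apply eq_inv_of_mul_eq_one_left; rw [hpv]; linear_combination hs / 4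
  set R := (b / a) ^ 5 with hR
  have hRa : R * a ^ 5 = b ^ 5 := by rw [hR]; field_simp
  have hR1 : R < 1 := by
    rw [hR]; exact pow_lt_one₀ (by positivity) (by rw [div_lt_one ha]; exact hab) (by norm_num)
  have hpp : a ^ 5 * b ^ 5 = p ^ 5 := by rw [hp]; ring
  have hq : (1 + R) ^ 2 * p ^ 5 = (p - p ^ 2 + 2 * p ^ 3) ^ 2 * R := by
    rw [← h2, ← hpp, ← hRa]; ring
  have hs3 : s ^ 3 = 5 * s := by linear_combination s * hs
  have hs4 : s ^ 4 = 25 := by linear_combination (s ^ 2 + 5) * hs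
  have hs5 : s ^ 5 = 25 * s := by linear_combination s * hs4
  have hs6 : s ^ 6 = 125 := by linear_combination s ^ 2 * hs4 + 25 * hs
  have hp5 : p ^ 5 = (11 + 5 * s) / 64 := by
    rw [hpv]; ring_nf; rw [hs5, hs4, hs3, hs]; ring
  have hσ : (p - p ^ 2 + 2 * p ^ 3) ^ 2 = (11 + 5 * s) / 64 * (-36 + 18 * s) := by
    rw [hpv]; ring_nf; rw [hs6, hs5, hs4, hs3, hs]; ring
  rw [hp5, hσ] at hq
  have hne : (11 + 5 * s) / 64 ≠ 0 := by positivity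
  have hq2 : (1 + R) ^ 2 = (-36 + 18 * s) * R := by
    apply mul_left_cancel₀ hne; linear_combination hq
  have hsq : (R - (-19 + 9 * s)) ^ 2 = (3 * Real.sqrt (85 - 38 * s)) ^ 2 := by
    rw [mul_pow, Real.sq_sqrt hr0]
    linear_combination hq2 + 81 * hs
  have hroot := Real.sqrt_nonneg (85 - 38 * s)
  rcases sq_eq_sq_iff_eq_or_eq_neg.1 hsq with h | h
  · exfalso; linarith
  · linarith

lemma cos1 : Real.cos (2 * Real.pi / 5) = (Real.sqrt 5 - 1) / 4 := by
  rw [show 2 * Real.pi / 5 = 2 * (Real.pi / 5) by ring, Real.cos_two_mul, Real.cos_pi_div_five]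
  linear_combination sqrt5 / 8
lemma cos2 : Real.cos (4 * Real.pi / 5) = -(Real.sqrt 5 + 1) / 4 := by
  rw [show 4 * Real.pi / 5 = Real.pi - Real.pi / 5 by ring, Real.cos_pi_sub, Real.cos_pi_div_five]
  ring

lemma values : ∃ l a b : ℝ, 0 < b ∧ b < a ∧ L 0 = l ∧ L (2 * Real.pi / 5) = l + Real.log a ∧
    L (4 * Real.pi / 5) = l + Real.log b ∧ 4 * (a * b) ^ 2 - 2 * (a * b) - 1 = 0 ∧
    a ^ 5 + b ^ 5 = a * b - (a * b) ^ 2 + 2 * (a * b) ^ 3 := by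
  obtain ⟨c, hc, h⟩ := Th_exp
  have pos : ∀ t, 0 < Th t := fun t => by
    have := h t
    have h2 := Real.exp_pos (L t)
    rw [← this] at h2
    exact (mul_pos_iff_of_pos_left hc).1 h2
  have hlog : ∀ t, L t = L 0 + Real.log (Th t / Th 0) := by
    intro t
    have e1 : L t = Real.log (c * Th t) := by rw [h, Real.log_exp]
    have e2 : L 0 = Real.log (c * Th 0) := by rw [h, Real.log_exp]
    rw [e1, e2, Real.log_mul hc.ne' (pos _).ne', Real.log_mul hc.ne' (pos _).ne',
      Real.log_div (pos _).ne' (pos _).ne']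
    ring
  have hlt : Th (4 * Real.pi / 5) < Th (2 * Real.pi / 5) := by
    have : L (4 * Real.pi / 5) < L (2 * Real.pi / 5) := by
      apply L_lt
      rw [cos1, cos2]
      have : 0 < Real.sqrt 5 := by positivity
      linarith
    have := Real.exp_lt_exp.2 this
    rw [← h, ← h] at this
    exact lt_of_mul_lt_mul_left this hc.le
  have p0 := pos 0
  set C := Th 0 with hC
  set T := Th (2 * Real.pi / 5) with hT
  set U := Th (4 * Real.pi / 5) with hU
  have t6 : Th (6 * Real.pi / 5) = U := by
    rw [show 6 * Real.pi / 5 = -(4 * Real.pi / 5) + 2 * Real.pi by ring, Th_per, Th_neg]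
  have t8 : Th (8 * Real.pi / 5) = T := by
    rw [show 8 * Real.pi / 5 = -(2 * Real.pi / 5) + 2 * Real.pi by ring, Th_per, Th_neg]
  have a8 : A (8 * Real.pi / 5) = A (2 * Real.pi / 5) := by
    rw [show 8 * Real.pi / 5 = -(2 * Real.pi / 5) + Real.pi + Real.pi by ring, A_pi, A_pi, A_neg]
  have b8 : B (8 * Real.pi / 5) = B (2 * Real.pi / 5) := by
    rw [show 8 * Real.pi / 5 = -(2 * Real.pi / 5) + Real.pi + Real.pi by ring, B_pi, B_pi, B_neg, neg_neg]
  have M : ∀ s t u v : ℝ, s + t = u → s - t = v → Th u * Th v = A s * A t + B s * B t := by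
    rintro s t _ _ rfl rfl; exact Th_mul s t
  have M4 : ∀ s t u v : ℝ, s + t = u → s - t = v →
      Th (u + Real.pi) * Th (v + Real.pi) = A s * A t - B s * B t := by
    intro s t u v hu hv
    rw [M (s + Real.pi) t _ _ (by rw [← hu]; ring) (by rw [← hv]; ring), A_pi, B_pi]; ring
  have r00 := M 0 0 0 0 (by ring) (by ring)
  have r11 := M (2 * Real.pi / 5) (2 * Real.pi / 5) (4 * Real.pi / 5) 0 (by ring) (by ring)
  have r22 := M (4 * Real.pi / 5) (4 * Real.pi / 5) (8 * Real.pi / 5) 0 (by ring) (by ring)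
  have r10 := M (2 * Real.pi / 5) 0 (2 * Real.pi / 5) (2 * Real.pi / 5) (by ring) (by ring)
  have r20 := M (4 * Real.pi / 5) 0 (4 * Real.pi / 5) (4 * Real.pi / 5) (by ring) (by ring)
  have r12 := M (4 * Real.pi / 5) (2 * Real.pi / 5) (6 * Real.pi / 5) (2 * Real.pi / 5) (by ring) (by ring)
  have v0 := M4 0 0 0 0 (by ring) (by ring)
  have v1 := M4 (2 * Real.pi / 5) (2 * Real.pi / 5) (4 * Real.pi / 5) 0 (by ring) (by ring)
  have v1' := M4 (4 * Real.pi / 5) 0 (4 * Real.pi / 5) (4 * Real.pi / 5) (by ring) (by ring)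
  have v2 := M4 (4 * Real.pi / 5) (4 * Real.pi / 5) (8 * Real.pi / 5) 0 (by ring) (by ring)
  have v2' := M4 (8 * Real.pi / 5) 0 (8 * Real.pi / 5) (8 * Real.pi / 5) (by ring) (by ring)
  have cm := CM
  rw [a8, b8] at v2'
  rw [t8] at r22
  rw [t6] at r12
  rw [← hC] at r00 r11 r22
  rw [← hT] at r10 r12
  rw [← hU] at r11 r20
  set A0 := A 0
  set B0 := B 0
  set A1 := A (2 * Real.pi / 5)
  set B1 := B (2 * Real.pi / 5)
  set A2 := A (4 * Real.pi / 5)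
  set B2 := B (4 * Real.pi / 5)
  set W0 := Th (0 + Real.pi)
  set W1 := Th (4 * Real.pi / 5 + Real.pi)
  set W2 := Th (8 * Real.pi / 5 + Real.pi)
  have hpT : 0 < T := pos _
  have hpU : 0 < U := pos _
  have hne : C ≠ 0 := p0.ne'
  obtain ⟨z1, z2⟩ := alg1 (A0 := A0 / C) (B0 := B0 / C) (A1 := A1 / C) (B1 := B1 / C)
    (A2 := A2 / C) (B2 := B2 / C) (T := T / C) (U := U / C) (W0 := W0 / C) (W1 := W1 / C) (W2 := W2 / C)
    (by field_simp; linarith) (by field_simp; linarith) (by field_simp; linarith)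
    (by field_simp; linarith) (by field_simp; linarith) (by field_simp; linarith)
    (by field_simp; linarith) (by field_simp; linarith) (by field_simp; linarith)
    (by field_simp; linarith) (by field_simp; linarith) (by field_simp; linarith)
    (by positivity) (by positivity) (by
      intro h; rw [div_left_inj' hne] at h; linarith)
  refine ⟨L 0, T / C, U / C, by positivity, by gcongr, rfl, hlog _, hlog _, z1, z2⟩

noncomputable def hZ (j : ℤ) : ℝ := (-1 : ℝ) ^ (j + 1) / (j * Real.sinh (Real.pi * j))

lemma hZ_neg (j : ℤ) : hZ (-j) = hZ j := by
  unfold hZ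
  have : (-1 : ℝ) ^ (-j + 1) = (-1) ^ (j + 1) := by
    rw [zpow_add₀ (by norm_num), zpow_add₀ (by norm_num), zpow_neg, ← inv_zpow]; norm_num
  rw [this]; push_cast
  rw [mul_neg, Real.sinh_neg, neg_mul_neg]

lemma hasSum_hZ (t : ℝ) : HasSum (fun j : ℤ => hZ j * Real.cos (j * t)) (2 * L t) := by
  have h := (L_both t).2
  have h1 : HasSum (fun n : ℕ => hZ (n : ℤ) * Real.cos (((n : ℤ) : ℝ) * t)) (L t) := by
    refine hs_of h (fun n => ?_) rfl
    unfold hZ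
    rw [show (-1 : ℝ) ^ ((n : ℤ) + 1) = (-1) ^ (n + 1) by exact_mod_cast zpow_natCast (-1 : ℝ) (n + 1)]
    push_cast; rfl
  have h2 : HasSum (fun n : ℕ => hZ (-(n : ℤ)) * Real.cos (((-(n : ℤ) : ℤ) : ℝ) * t)) (L t) := by
    refine hs_of h1 (fun n => ?_) rfl
    rw [hZ_neg]; push_cast; rw [neg_mul, Real.cos_neg]
  have := HasSum.of_nat_of_neg (f := fun j : ℤ => hZ j * Real.cos (j * t)) h1 h2
  refine hs_of this (fun _ => rfl) ?_
  simp [hZ]; ring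

lemma cos_red (k : ℤ) (x : ℝ) (m : ℤ) : Real.cos (((5 * k + m : ℤ) : ℝ) * (2 * x * Real.pi / 5)) =
    Real.cos (m * (2 * x * Real.pi / 5) + k * x * (2 * Real.pi)) := by
  congr 1; push_cast; ring

lemma char_sum (j : ℤ) : ((if j % 5 = 1 then (1 : ℝ) else 0) + (if (-j) % 5 = 1 then 1 else 0)) / 2 =
    1 / 5 * (1 + 2 * Real.cos (2 * Real.pi / 5) * Real.cos (j * (2 * Real.pi / 5)) +
      2 * Real.cos (4 * Real.pi / 5) * Real.cos (j * (4 * Real.pi / 5))) := by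
  obtain ⟨k, m, hm, rfl⟩ : ∃ k m : ℤ, (m = 0 ∨ m = 1 ∨ m = -1 ∨ m = 2 ∨ m = -2) ∧ j = 5 * k + m := by
    have h := Int.emod_add_mul_ediv j 5
    have : j % 5 = 0 ∨ j % 5 = 1 ∨ j % 5 = 2 ∨ j % 5 = 3 ∨ j % 5 = 4 := by omega
    rcases this with h' | h' | h' | h' | h'
    · exact ⟨j / 5, 0, by simp, by omega⟩
    · exact ⟨j / 5, 1, by simp, by omega⟩
    · exact ⟨j / 5, 2, by simp, by omega⟩
    · exact ⟨j / 5 + 1, -2, by simp, by omega⟩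
    · exact ⟨j / 5 + 1, -1, by simp, by omega⟩
  have e1 : Real.cos (((5 * k + m : ℤ) : ℝ) * (2 * Real.pi / 5)) = Real.cos (m * (2 * Real.pi / 5)) := by
    rw [show ((5 * k + m : ℤ) : ℝ) * (2 * Real.pi / 5) = m * (2 * Real.pi / 5) + k * (2 * Real.pi) by
      push_cast; ring, Real.cos_add_int_mul_two_pi]
  have e2 : Real.cos (((5 * k + m : ℤ) : ℝ) * (4 * Real.pi / 5)) = Real.cos (m * (4 * Real.pi / 5)) := by
    rw [show ((5 * k + m : ℤ) : ℝ) * (4 * Real.pi / 5) = m * (4 * Real.pi / 5) + (2 * k : ℤ) * (2 * Real.pi) by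
      push_cast; ring, Real.cos_add_int_mul_two_pi]
  have c3 : Real.cos (2 * (4 * Real.pi / 5)) = (Real.sqrt 5 - 1) / 4 := by
    rw [← cos1, ← Real.cos_two_pi_sub]; congr 1; ring
  have c4 : Real.cos (2 * (2 * Real.pi / 5)) = -(Real.sqrt 5 + 1) / 4 := by
    rw [← cos2]; congr 1; ring
  rw [e1, e2]
  have hs := sqrt5
  rcases hm with rfl | rfl | rfl | rfl | rfl
  · rw [if_neg (by omega), if_neg (by omega)]
    simp only [Int.cast_zero, zero_mul, Real.cos_zero, cos1, cos2]; ring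
  · rw [if_pos (by omega), if_neg (by omega)]
    simp only [Int.cast_one, one_mul, cos1, cos2]; linear_combination (-1 / 20) * hs
  · rw [if_neg (by omega), if_pos (by omega)]
    simp only [Int.cast_neg, Int.cast_one, neg_mul, one_mul, Real.cos_neg, cos1, cos2]
    linear_combination (-1 / 20) * hs
  · rw [if_neg (by omega), if_neg (by omega)]
    simp only [Int.cast_ofNat, c3, c4, cos1, cos2]
    linear_combination (1 / 20) * hs
  · rw [if_neg (by omega), if_neg (by omega)]
    simp only [Int.cast_neg, Int.cast_ofNat, neg_mul, Real.cos_neg, c3, c4, cos1, cos2]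
    linear_combination (1 / 20) * hs

lemma main_sum : HasSum (fun n : ℤ => hZ (5 * n + 1))
    (1 / 5 * (2 * L 0 + 2 * Real.cos (2 * Real.pi / 5) * (2 * L (2 * Real.pi / 5)) +
      2 * Real.cos (4 * Real.pi / 5) * (2 * L (4 * Real.pi / 5)))) := by
  have H0 : HasSum hZ (2 * L 0) := hs_of (hasSum_hZ 0) (fun j => by simp) rfl
  have H := ((H0.add ((hasSum_hZ (2 * Real.pi / 5)).mul_left (2 * Real.cos (2 * Real.pi / 5)))).add
    ((hasSum_hZ (4 * Real.pi / 5)).mul_left (2 * Real.cos (4 * Real.pi / 5)))).mul_left (1 / 5)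
  obtain ⟨F, hF⟩ : ∃ F : ℤ → ℝ, ∀ j, F j = hZ j * (if j % 5 = 1 then 1 else 0) := ⟨_, fun _ => rfl⟩
  have SF : Summable F := by
    refine Summable.of_norm_bounded H0.summable.norm (fun j => ?_)
    rw [hF]; split_ifs <;> simp
  have SF' : HasSum (fun j => F (-j)) (∑' j, F j) := by
    have := (Equiv.neg ℤ).hasSum_iff (f := F) (a := ∑' j, F j)
    exact this.2 SF.hasSum
  have H2 := (SF.hasSum.add SF').mul_left (1 / 2)
  have H3 := hs_of H (g := fun j => 1 / 2 * (F j + F (-j))) (fun j => by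
    rw [hF, hF, hZ_neg]
    have := char_sum j
    linear_combination hZ j * this) rfl
  have val := H2.unique H3
  have inj : Function.Injective (fun n : ℤ => 5 * n + 1) := fun x y h => by simpa using h
  have H4 : HasSum (F ∘ fun n : ℤ => 5 * n + 1) (∑' j, F j) := by
    refine (inj.hasSum_iff ?_).2 SF.hasSum
    intro x hx
    rw [hF, if_neg, mul_zero]
    intro h
    exact hx ⟨x / 5, by simp only; omega⟩
  refine hs_of H4 (fun n => ?_) ?_
  · simp only [Function.comp, hF]; rw [if_pos (by omega), mul_one]
  · rw [← val]; ring

end F51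

theorem F51_at_one :
    Tendsto (fun N : ℕ => ∑ n ∈ Finset.Ioo (-(N : ℤ)) (N : ℤ),
        ∑' m : ℤ, (-1 : ℝ) ^ (m + n) / ((m : ℝ) ^ 2 + (5 * (n : ℝ) + 1) ^ 2))
      atTop
      (nhds (-(Real.pi / (5 * Real.sqrt 5)) *
          Real.log (-19 + 9 * Real.sqrt 5 - 3 * Real.sqrt (85 - 38 * Real.sqrt 5))
        + Real.pi / 5 * Real.log (Real.sqrt 5 - 1))) := by
  have h0 : ∀ n : ℤ, (5 * (n : ℝ) + 1) ≠ 0 := by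
    intro n
    have : (5 * n + 1 : ℤ) ≠ 0 := by omega
    exact_mod_cast this
  have e : ∀ n : ℤ, ∑' m : ℤ, (-1 : ℝ) ^ (m + n) / ((m : ℝ) ^ 2 + (5 * (n : ℝ) + 1) ^ 2) =
      Real.pi * F51.hZ (5 * n + 1) := by
    intro n
    rw [F51.inner_sum (h0 n), F51.hZ]
    have : (-1 : ℝ) ^ (5 * n + 1 + 1) = (-1) ^ n := by
      rw [show 5 * n + 1 + 1 = 2 * (2 * n + 1) + n by ring, zpow_add₀ (by norm_num), zpow_mul]
      norm_num
    rw [this]; push_cast; ring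
  simp_rw [e]
  have H := (F51.main_sum.mul_left Real.pi)
  rw [HasSum, SummationFilter.unconditional_filter] at H
  have T := H.comp (Finset.tendsto_Ioo_neg (R := ℤ))
  obtain ⟨l, a, b, hb, hab, hL0, hL1, hL2, z1, z2⟩ := F51.values
  obtain ⟨y1, y2⟩ := F51.alg2 hb hab z1 z2
  have ha : 0 < a := hb.trans hab
  rw [y1, y2, Real.log_inv, Real.log_pow, Real.log_mul ha.ne' hb.ne', Real.log_div hb.ne' ha.ne']
  rw [hL0, hL1, hL2, F51.cos1, F51.cos2] at T
  refine Eq.subst (motive := fun v => Tendsto _ atTop (nhds v)) ?_ T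
  have hs := F51.sqrt5
  have : Real.sqrt 5 ≠ 0 := by positivity
  field_simp
  push_cast
  linear_combination 4 * (Real.log a - Real.log b) * hs
end
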